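/- Let G be any of the three minimal 8-vertex Lemke graphs L, L₁, L₂, and let H be either the complete graph K₈ on 8 vertices or the complete bipartite graph K_{4,4}. Then the pebbling number of the Cartesian product satisfies π(G□H) = 64. -/

import Mathlib

open SimpleGraph Finset

/-- A single pebbling move on `G`: remove two pebbles from a vertex `v` with at least two
pebbles and add one pebble to an adjacent vertex `w`. -/
def PebblingMove {V : Type*} (G : SimpleGraph V) (c c' : V → ℕ) : Prop :=
  ∃ v w, G.Adj v w ∧ 2 ≤ c v ∧ c' v = c v - 2 ∧ c' w = c w + 1 ∧
    ∀ u, u ≠ v → u ≠ w → c' u = c u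

/-- Some finite sequence of pebbling moves starting from `c` places at least `t` pebbles
on the vertex `r`. -/
def NSolvable {V : Type*} (G : SimpleGraph V) (c : V → ℕ) (r : V) (t : ℕ) : Prop :=
  ∃ c', Relation.ReflTransGen (PebblingMove G) c c' ∧ t ≤ c' r

/-- A configuration `c` is `r`-solvable. -/
def Solvable {V : Type*} (G : SimpleGraph V) (c : V → ℕ) (r : V) : Prop :=
  NSolvable G c r 1

/-- The pebbling number `π(G)`: least `k` such that every configuration of size `k` is
`r`-solvable for every root `r`. -/
noncomputable def pebblingNumber {V : Type*} (G : SimpleGraph V) [Fintype V] : ℕ :=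
  sInf {k | ∀ c : V → ℕ, (∑ v, c v) = k → ∀ r, Solvable G c r}

/-- The 2-pebbling number `π₂(G, s)`: least `m` such that for every root `r`, every
configuration of size at least `m` with support of size exactly `s` can place two pebbles
on `r`. -/
noncomputable def twoPebblingNumber {V : Type*} (G : SimpleGraph V) [Fintype V] (s : ℕ) : ℕ :=
  sInf {m | ∀ (r : V) (c : V → ℕ), m ≤ ∑ v, c v →
    (Finset.univ.filter fun v => 1 ≤ c v).card = s → NSolvable G c r 2}

/-- The Lemke graph `L` on vertices `v1, …, v8` (as `0, …, 7`). -/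
def lemkeL : SimpleGraph (Fin 8) :=
  SimpleGraph.fromRel fun a b =>
    (a, b) ∈ ([(0, 1), (0, 2), (1, 3), (2, 4), (2, 5), (2, 6), (3, 4), (3, 5), (3, 6),
      (3, 7), (4, 7), (5, 7), (6, 7)] : List (Fin 8 × Fin 8))

/-- The minimal Lemke graph `L₁`. -/
def lemkeL1 : SimpleGraph (Fin 8) :=
  SimpleGraph.fromRel fun a b =>
    (a, b) ∈ ([(0, 1), (0, 2), (1, 2), (1, 3), (2, 4), (2, 5), (2, 6), (3, 4), (3, 7),
      (4, 7), (5, 7), (6, 7)] : List (Fin 8 × Fin 8))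

/-- The minimal Lemke graph `L₂`. -/
def lemkeL2 : SimpleGraph (Fin 8) :=
  SimpleGraph.fromRel fun a b =>
    (a, b) ∈ ([(0, 1), (0, 2), (1, 3), (2, 4), (2, 5), (2, 6), (3, 4), (3, 6), (3, 7),
      (4, 5), (4, 7), (5, 6), (5, 7), (6, 7)] : List (Fin 8 × Fin 8))

namespace Peb

/-! ### Reachability calculus -/

section Reach

variable {V : Type*} {G : SimpleGraph V}

/-- From `c` one can reach a configuration dominating `d`. -/
def R (G : SimpleGraph V) (c d : V → ℕ) : Prop :=
  ∃ c', Relation.ReflTransGen (PebblingMove G) c c' ∧ d ≤ c'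

lemma R.of_le {c d : V → ℕ} (h : d ≤ c) : R G c d := ⟨c, .refl, h⟩

lemma move_add {c c' : V → ℕ} (d : V → ℕ) (h : PebblingMove G c c') :
    PebblingMove G (c + d) (c' + d) := by
  obtain ⟨v, w, ha, h2, hv, hw, ho⟩ := h
  refine ⟨v, w, ha, ?_, ?_, ?_, ?_⟩
  · simp only [Pi.add_apply]; omega
  · simp only [Pi.add_apply]; omega
  · simp only [Pi.add_apply]; omega
  · intro u h1 h3
    simp only [Pi.add_apply, ho u h1 h3]

lemma rtg_add {c c' : V → ℕ} (d : V → ℕ)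
    (h : Relation.ReflTransGen (PebblingMove G) c c') :
    Relation.ReflTransGen (PebblingMove G) (c + d) (c' + d) := by
  induction h with
  | refl => exact .refl
  | tail _ h2 ih => exact ih.tail (move_add d h2)

lemma R.trans {c d e : V → ℕ} (h1 : R G c d) (h2 : R G d e) : R G c e := by
  obtain ⟨c', hc, hd⟩ := h1
  obtain ⟨d', hd', he⟩ := h2
  refine ⟨d' + (c' - d), hc.trans ?_, ?_⟩
  · have h := rtg_add (c' - d) hd'
    have e1 : d + (c' - d) = c' := by
      funext v
      have : d v ≤ c' v := hd v
      simp only [Pi.add_apply, Pi.sub_apply]; omega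
    rwa [e1] at h
  · intro v
    have : e v ≤ d' v := he v
    simp only [Pi.add_apply, Pi.sub_apply]; omega

lemma R.add {c d c' d' : V → ℕ} (h1 : R G c d) (h2 : R G c' d') : R G (c + c') (d + d') := by
  obtain ⟨x, hx, hd⟩ := h1
  obtain ⟨y, hy, hd'⟩ := h2
  refine ⟨x + y, (rtg_add c' hx).trans ?_, add_le_add hd hd'⟩
  have := rtg_add x hy
  rwa [add_comm c' x, add_comm y x] at this

lemma R.refl (c : V → ℕ) : R G c c := R.of_le le_rfl

lemma R.mono {c c' d d' : V → ℕ} (h : R G c d) (h1 : c ≤ c') (h2 : d' ≤ d) : R G c' d' :=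
  (R.of_le h1).trans (h.trans (R.of_le h2))

lemma R.sum {ι : Type*} (s : Finset ι) {c d : ι → V → ℕ} (h : ∀ i ∈ s, R G (c i) (d i)) :
    R G (∑ i ∈ s, c i) (∑ i ∈ s, d i) := by
  classical
  induction s using Finset.induction_on with
  | empty => simpa using R.refl _
  | insert a s ha ih =>
    rw [Finset.sum_insert ha, Finset.sum_insert ha]
    exact (h a (by simp)).add (ih fun i hi => h i (by simp [hi]))

variable [DecidableEq V]

lemma R.move {v w : V} (h : G.Adj v w) : R G (Pi.single v 2) (Pi.single w 1) := by
  refine ⟨Pi.single w 1, .single ⟨v, w, h, ?_, ?_, ?_, ?_⟩, le_rfl⟩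
  · simp
  · simp [h.ne]
  · simp [h.ne']
  · intro u h1 h2
    simp [h1, h2]

lemma R.move_n {v w : V} (h : G.Adj v w) (k : ℕ) :
    R G (Pi.single v (2 * k)) (Pi.single w k) := by
  induction k with
  | zero => simpa using R.refl _
  | succ k ih =>
    rw [mul_add, Pi.single_add, Pi.single_add]
    exact ih.add (R.move h)

lemma R.half {v w : V} (h : G.Adj v w) (k : ℕ) :
    R G (Pi.single v k) (Pi.single w (k / 2)) :=
  (R.move_n h (k / 2)).mono (Pi.single_mono v (by omega)) le_rfl

/-- Push-forward of a configuration. -/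
def push {W : Type*} [DecidableEq W] [Fintype V] (f : V → W) (c : V → ℕ) : W → ℕ :=
  ∑ v, Pi.single (f v) (c v)

lemma push_add {W : Type*} [DecidableEq W] [Fintype V] (f : V → W) (c d : V → ℕ) :
    push f (c + d) = push f c + push f d := by
  simp only [push, Pi.add_apply, Pi.single_add, Finset.sum_add_distrib]

lemma push_single {W : Type*} [DecidableEq W] [Fintype V] (f : V → W) (v : V) (k : ℕ) :
    push f (Pi.single v k) = Pi.single (f v) k := by
  unfold push
  rw [Finset.sum_eq_single v]
  · simp
  · intro b _ hb
    simp [hb]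
  · simp

lemma push_mono {W : Type*} [DecidableEq W] [Fintype V] (f : V → W) {c d : V → ℕ} (h : c ≤ d) :
    push f c ≤ push f d :=
  Finset.sum_le_sum fun v _ => Pi.single_mono (f v) (h v)

lemma push_sum {W ι : Type*} [DecidableEq W] [Fintype V] (f : V → W) (s : Finset ι)
    (c : ι → V → ℕ) : push f (∑ i ∈ s, c i) = ∑ i ∈ s, push f (c i) := by
  classical
  induction s using Finset.induction_on with
  | empty => simp [push]
  | insert a s ha ih => rw [Finset.sum_insert ha, Finset.sum_insert ha, push_add, ih]

lemma R.push {W : Type*} [DecidableEq W] [Fintype V] {G' : SimpleGraph W} (f : V → W)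
    (hf : ∀ v w, G.Adj v w → G'.Adj (f v) (f w)) {c d : V → ℕ} (h : R G c d) :
    R G' (Peb.push f c) (Peb.push f d) := by
  obtain ⟨c', hc, hd⟩ := h
  refine R.mono ?_ le_rfl (push_mono f hd)
  clear hd
  induction hc with
  | refl => exact R.refl _
  | tail _ h2 ih =>
    rename_i x y hxy
    refine ih.trans ?_
    obtain ⟨v, w, ha, h2, hv, hw, ho⟩ := h2
    have e1 : x = (x - Pi.single v 2) + Pi.single v 2 := by
      funext u
      by_cases hu : u = v
      · subst hu; simp; omega
      · simp [hu]
    have e2 : y = (x - Pi.single v 2) + Pi.single w 1 := by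
      funext u
      by_cases hu : u = v
      · subst hu; simp [ha.ne, hv]
      · by_cases hw' : u = w
        · subst hw'; simp [hu]; omega
        · simp [hu, hw', ho u hu hw']
    rw [e2, push_add, push_single]
    conv_lhs => rw [e1]
    rw [push_add, push_single]
    exact (R.refl _).add (R.move (hf _ _ ha))

lemma R.solvable {c : V → ℕ} {r : V} {t : ℕ} (h : R G c (Pi.single r t)) : NSolvable G c r t := by
  obtain ⟨c', h1, h2⟩ := h
  exact ⟨c', h1, by simpa using h2 r⟩

end Reach

/-! ### Choosing intermediate vectors -/

lemma exists_between (lo hi : Fin 8 → ℕ) (h : lo ≤ hi) (m : ℕ) (h1 : ∑ g, lo g ≤ m)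
    (h2 : m ≤ ∑ g, hi g) : ∃ e, lo ≤ e ∧ e ≤ hi ∧ ∑ g, e g = m := by
  induction m, h1 using Nat.le_induction with
  | base => exact ⟨lo, le_rfl, h, rfl⟩
  | succ m hm ih =>
    obtain ⟨e, h3, h4, h5⟩ := ih (by omega)
    have : ∃ g, e g < hi g := by
      by_contra! hc
      have := Finset.sum_le_sum (s := Finset.univ) fun g _ => hc g
      omega
    obtain ⟨g, hg⟩ := this
    refine ⟨e + Pi.single g 1, h3.trans (by simp), ?_, ?_⟩
    · intro u
      by_cases hu : u = g
      · subst hu; simp; omega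
      · simpa [hu] using h4 u
    · simp [Finset.sum_add_distrib, h5]

/-- The number of pebbles rounded up to pairs. -/
def vv (c : Fin 8 → ℕ) : ℕ := ∑ g, (c g + 1) / 2

/-- The pebbling facts about `(G, r)` that are needed. -/
def Nice (G : SimpleGraph (Fin 8)) (r : Fin 8) : Prop :=
  (∀ c : Fin 8 → ℕ, 8 ≤ ∑ g, c g → R G c (Pi.single r 1)) ∧
  ∃ (E : Fin 8 → ℕ) (z : Fin 8), E z = 9 ∧ (∀ g, g ≠ z → E g ≤ 1) ∧ vv E = 9 ∧
    ∀ c : Fin 8 → ℕ, 9 ≤ vv c → c ≠ E → R G c (Pi.single r 2)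

/-! ### A verified checker for `Nice` -/

section Checker

/-- Pointwise domination of lists. -/
def ltLe : List ℕ → List ℕ → Prop
  | [], _ => True
  | a :: s, b :: t => a ≤ b ∧ ltLe s t
  | _ :: _, [] => False

def zerosB : List ℕ → Bool
  | [] => true
  | a :: s => Nat.beq a 0 && zerosB s

def filt (j : ℕ) : List (ℕ × List ℕ) → List (ℕ × List ℕ)
  | [] => []
  | (_, []) :: ts => filt j ts
  | (n, a :: s) :: ts => bif Nat.ble a j then (n, s) :: filt j ts else filt j ts

/-- Check that all lists of length `k` with sum at least `rem` dominate a template. -/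
def cov : ℕ → ℕ → List (ℕ × List ℕ) → Bool
  | 0, rem, ts => Nat.blt 0 rem || !ts.isEmpty
  | k + 1, rem, ts => (ts.any fun t => zerosB t.2) ||
      ((List.range (rem + 1)).all fun j => cov k (rem - j) (filt j ts))

def cov2 : ℕ → ℕ → ℕ → List (ℕ × List ℕ) → Bool
  | 0, rem, s, ts => Nat.blt 0 rem || ts.any fun t => Nat.ble (t.1 + s) 10
  | k + 1, rem, s, ts =>
      (ts.any fun t => (Nat.ble (t.1 + s + (k + 1)) 10 || Nat.ble (t.1 + s + rem) 10) && zerosB t.2) ||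
      ((List.range (rem + 1)).all fun j =>
        cov2 k (rem - j) (bif Nat.beq j 0 then s else s + 1) (filt (2 * j - 1) ts))

lemma zerosB_le {s l : List ℕ} (h : zerosB s = true) (hl : s.length ≤ l.length) : ltLe s l := by
  induction s generalizing l with
  | nil => simp [ltLe]
  | cons a s ih =>
    cases l with
    | nil => simp at hl
    | cons b l =>
      simp only [zerosB, Bool.and_eq_true, Nat.beq_eq] at h
      exact ⟨by omega, ih h.2 (by simpa using hl)⟩

lemma mem_filt {j n : ℕ} {s : List ℕ} {ts : List (ℕ × List ℕ)} (h : (n, s) ∈ filt j ts) :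
    ∃ a, a ≤ j ∧ (n, a :: s) ∈ ts := by
  induction ts with
  | nil => simp [filt] at h
  | cons t ts ih =>
    obtain ⟨m, u⟩ := t
    cases u with
    | nil =>
      obtain ⟨a, h1, h2⟩ := ih (by simpa [filt] using h)
      exact ⟨a, h1, by simp [h2]⟩
    | cons b u =>
      simp only [filt] at h
      cases hb : Nat.ble b j with
      | false =>
        rw [hb] at h
        obtain ⟨a, h1, h2⟩ := ih (by simpa using h)
        exact ⟨a, h1, by simp [h2]⟩
      | true =>
        rw [hb] at h
        simp only [cond_true, List.mem_cons, Prod.mk.injEq] at h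
        rcases h with ⟨h1, h2⟩ | h
        · exact ⟨b, Nat.le_of_ble_eq_true hb, by simp [h1, h2]⟩
        · obtain ⟨a, h1, h2⟩ := ih h
          exact ⟨a, h1, by simp [h2]⟩

lemma cov_sound (k : ℕ) : ∀ (rem : ℕ) (ts : List (ℕ × List ℕ)), cov k rem ts = true →
    (∀ t ∈ ts, t.2.length = k) → ∀ l : List ℕ, l.length = k → rem ≤ l.sum →
    ∃ t ∈ ts, ltLe t.2 l := by
  induction k with
  | zero =>
    intro rem ts h ht l hl hs
    obtain rfl : l = [] := by simpa using hl
    have h0 : rem = 0 := by simpa using hs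
    subst h0
    cases ts with
    | nil => simp [cov, Nat.blt] at h
    | cons t ts =>
      refine ⟨t, by simp, ?_⟩
      have : t.2 = [] := by simpa using ht t (by simp)
      rw [this]; trivial
  | succ k ih =>
    intro rem ts h ht l hl hs
    rw [cov, Bool.or_eq_true] at h
    rcases h with h | h
    · obtain ⟨t, h1, h2⟩ := List.any_eq_true.1 h
      exact ⟨t, h1, zerosB_le h2 (by rw [ht t h1, hl])⟩
    · cases l with
      | nil => simp at hl
      | cons a l =>
        rw [List.all_eq_true] at h
        have h1 := h (min a rem) (List.mem_range.2 (by omega))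
        have hk : ∀ t ∈ filt (min a rem) ts, t.2.length = k := by
          rintro ⟨n, s⟩ hm
          obtain ⟨b, -, h5⟩ := mem_filt hm
          simpa using ht _ h5
        have hsum : rem - min a rem ≤ l.sum := by
          simp only [List.sum_cons] at hs; omega
        obtain ⟨⟨n, s⟩, h2, h3⟩ := ih _ _ h1 hk l (by simpa using hl) hsum
        obtain ⟨b, h4, h5⟩ := mem_filt h2
        exact ⟨(n, b :: s), h5, h4.trans (min_le_left _ _), h3⟩

/-- Number of nonzero entries. -/
def supp : List ℕ → ℕ
  | [] => 0
  | a :: s => min a 1 + supp s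

lemma supp_le (l : List ℕ) : supp l ≤ min l.length l.sum := by
  induction l with
  | nil => simp [supp]
  | cons a l ih => simp only [supp, List.length_cons, List.sum_cons]; omega

lemma cov2_sound (k : ℕ) : ∀ (rem s : ℕ) (ts : List (ℕ × List ℕ)), cov2 k rem s ts = true →
    (∀ t ∈ ts, t.2.length = k) → ∀ l : List ℕ, l.length = k → l.sum = rem →
    ∃ t ∈ ts, ltLe t.2 (l.map fun e => 2 * e - 1) ∧ t.1 + s + supp l ≤ 10 := by
  induction k with
  | zero =>
    intro rem s ts h ht l hl hs
    obtain rfl : l = [] := by simpa using hl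
    have h0 : rem = 0 := by simpa using hs.symm
    subst h0
    simp only [cov2, Nat.blt, Bool.or_eq_true] at h
    rcases h with h | h
    · simp at h
    · obtain ⟨t, h1, h2⟩ := List.any_eq_true.1 h
      refine ⟨t, h1, ?_, ?_⟩
      · have : t.2 = [] := by simpa using ht t h1
        rw [this]; trivial
      · simpa [supp] using Nat.le_of_ble_eq_true h2
  | succ k ih =>
    intro rem s ts h ht l hl hs
    rw [cov2, Bool.or_eq_true] at h
    rcases h with h | h
    · obtain ⟨t, h1, h2⟩ := List.any_eq_true.1 h
      rw [Bool.and_eq_true] at h2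
      refine ⟨t, h1, zerosB_le h2.2 (by rw [ht t h1]; simp [hl]), ?_⟩
      have := supp_le l
      rcases (Bool.or_eq_true _ _).mp h2.1 with h3 | h3
      · have := Nat.le_of_ble_eq_true h3
        omega
      · have := Nat.le_of_ble_eq_true h3
        omega
    · cases l with
      | nil => simp at hl
      | cons a l =>
        rw [List.all_eq_true] at h
        simp only [List.sum_cons] at hs
        have h1 := h a (List.mem_range.2 (by omega))
        have hk : ∀ t ∈ filt (2 * a - 1) ts, t.2.length = k := by
          rintro ⟨n, s⟩ hm
          obtain ⟨b, -, h5⟩ := mem_filt hm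
          simpa using ht _ h5
        obtain ⟨⟨n, u⟩, h2, h3, h6⟩ := ih _ _ _ h1 hk l (by simpa using hl) (by omega)
        obtain ⟨b, h4, h5⟩ := mem_filt h2
        refine ⟨(n, b :: u), h5, ⟨h4, h3⟩, ?_⟩
        have h7 : (bif Nat.beq a 0 then s else s + 1) = s + min a 1 := by
          cases a with
          | zero => simp
          | succ a => simp [Nat.beq]
        rw [h7] at h6
        simp only [supp] at h6 ⊢; omega

/-- Backward pebbling move on templates: one pebble on `w` is paid for by two on `v`. -/
def stepf (t : ℕ → ℕ) (v w i : ℕ) : ℕ :=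
  bif Nat.beq i v then t i + 2 else bif Nat.beq i w then t i - 1 else t i

def adjb (es : List (ℕ × ℕ)) (v w : ℕ) : Bool :=
  es.any fun p => (Nat.beq p.1 v && Nat.beq p.2 w) || (Nat.beq p.1 w && Nat.beq p.2 v)

/-- Decode a template from the decimal code of its backward moves. -/
def bld (es : List (ℕ × ℕ)) : ℕ → ℕ → (ℕ → ℕ) → ℕ → ℕ
  | 0, _, t => t
  | f + 1, n, t => bif adjb es (n / 10 % 10) (n % 10) then
      bld es f (n / 100) (stepf t (n / 10 % 10) (n % 10)) else t

def sgl (r k i : ℕ) : ℕ := bif Nat.beq i r then k else 0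

def lst (t : ℕ → ℕ) : List ℕ := [t 0, t 1, t 2, t 3, t 4, t 5, t 6, t 7]

structure Cert where
  c1 : List ℕ
  c2 : List ℕ
  cE : List ℕ
  E : List ℕ
  z : ℕ

def leB : List ℕ → List ℕ → Bool
  | [], _ => true
  | a :: s, b :: t => Nat.ble a b && leB s t
  | _ :: _, [] => false

lemma leB_le {s t : List ℕ} (h : leB s t = true) : ltLe s t := by
  induction s generalizing t with
  | nil => trivial
  | cons a s ih =>
    cases t with
    | nil => simp [leB] at h
    | cons b t =>
      simp only [leB, Bool.and_eq_true] at h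
      exact ⟨Nat.le_of_ble_eq_true h.1, ih h.2⟩

def tmpl (es : List (ℕ × ℕ)) (r k n : ℕ) : List ℕ := lst (bld es 11 n (sgl r k))

def ts1 (es : List (ℕ × ℕ)) (r : ℕ) (C : Cert) : List (ℕ × List ℕ) :=
  C.c1.map fun n => ((tmpl es r 1 n).sum, tmpl es r 1 n)

def ts2 (es : List (ℕ × ℕ)) (r : ℕ) (C : Cert) : List (ℕ × List ℕ) :=
  C.c2.map fun n => (0, tmpl es r 2 n)

def tsE (C : Cert) : List (ℕ × List ℕ) := bif C.cE.isEmpty then [] else [(0, C.E)]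

/-- Whenever `E` is used, `E` plus any pebble dominates a certified template. -/
def chkE (es : List (ℕ × ℕ)) (r : ℕ) (C : Cert) : Bool :=
  C.cE.isEmpty || (List.range 8).all fun v =>
    C.cE.any fun n => leB (tmpl es r 2 n) (lst fun i => C.E.getD i 0 + sgl v 1 i)

def chkShape (C : Cert) : Bool :=
  Nat.beq C.E.length 8 && Nat.blt C.z 8 && Nat.beq (C.E.getD C.z 0) 9 &&
  ((List.range 8).all fun v => Nat.beq v C.z || Nat.ble (C.E.getD v 0) 1) &&
  Nat.beq ((C.E.map fun x => (x + 1) / 2).sum) 9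

def chk (es : List (ℕ × ℕ)) (r : ℕ) (C : Cert) : Bool :=
  chkShape C && chkE es r C && cov 8 8 (ts1 es r C) &&
    cov2 8 9 0 (ts1 es r C ++ (ts2 es r C ++ tsE C))

def chkAll (es : List (ℕ × ℕ)) : ℕ → List Cert → Bool
  | _, [] => true
  | r, C :: Cs => chk es r C && chkAll es (r + 1) Cs


lemma ltLe_lst {s : List ℕ} {c : ℕ → ℕ} {t : ℕ → ℕ} (hs : s = lst t) (h : ltLe s (lst c)) :
    ∀ i : Fin 8, t i ≤ c i := by
  subst hs
  simp only [lst, ltLe] at h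
  intro i
  fin_cases i <;> simp <;> omega

variable {G : SimpleGraph (Fin 8)}

/-- `es` is a sound list of edges. -/
def Edges (G : SimpleGraph (Fin 8)) (es : List (ℕ × ℕ)) : Prop :=
  ∀ p ∈ es, ∃ (h1 : p.1 < 8) (h2 : p.2 < 8), G.Adj ⟨p.1, h1⟩ ⟨p.2, h2⟩

lemma adjb_sound {es : List (ℕ × ℕ)} (hes : Edges G es) {v w : ℕ} (h : adjb es v w = true) :
    ∃ (h1 : v < 8) (h2 : w < 8), G.Adj ⟨v, h1⟩ ⟨w, h2⟩ := by
  obtain ⟨⟨a, b⟩, hp, h⟩ := List.any_eq_true.1 h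
  obtain ⟨h1, h2, ha⟩ := hes _ hp
  simp only [Bool.or_eq_true, Bool.and_eq_true, Nat.beq_eq] at h
  rcases h with ⟨rfl, rfl⟩ | ⟨rfl, rfl⟩
  · exact ⟨h1, h2, ha⟩
  · exact ⟨h2, h1, ha.symm⟩

lemma beq_ne {a b : ℕ} (h : a ≠ b) : Nat.beq a b = false := by
  rw [Bool.eq_false_iff]; simpa using h

lemma stepf_sound (t : ℕ → ℕ) {v w : ℕ} (hv : v < 8) (hw : w < 8)
    (ha : G.Adj ⟨v, hv⟩ ⟨w, hw⟩) :
    R G (fun i : Fin 8 => stepf t v w i) (fun i : Fin 8 => t i) := by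
  have hne : v ≠ w := fun h => ha.ne (Fin.ext h)
  have key := (R.refl (G := G)
    ((fun i : Fin 8 => t i) - Pi.single (⟨w, hw⟩ : Fin 8) 1)).add (R.move ha)
  refine key.mono ?_ ?_
  · intro i
    rcases eq_or_ne i ⟨v, hv⟩ with rfl | h1
    · have : (⟨v, hv⟩ : Fin 8) ≠ ⟨w, hw⟩ := ha.ne
      simp [stepf, this]
    · have hn : (i : ℕ) ≠ v := fun h => h1 (Fin.ext h)
      rcases eq_or_ne i ⟨w, hw⟩ with rfl | h2
      · simp [stepf, h1, beq_ne hne.symm]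
      · have hn2 : (i : ℕ) ≠ w := fun h => h2 (Fin.ext h)
        simp [stepf, h1, h2, beq_ne hn, beq_ne hn2]
  · intro i
    rcases eq_or_ne i ⟨w, hw⟩ with rfl | h2
    · simp; omega
    · simp [h2]

lemma bld_sound {es : List (ℕ × ℕ)} (hes : Edges G es) {d : Fin 8 → ℕ} (f : ℕ) :
    ∀ (n : ℕ) (t : ℕ → ℕ), R G (fun i : Fin 8 => t i) d →
      R G (fun i : Fin 8 => bld es f n t i) d := by
  induction f with
  | zero => intro n t h; simpa [bld] using h
  | succ f ih =>
    intro n t h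
    unfold bld
    cases hb : adjb es (n / 10 % 10) (n % 10) with
    | false => simpa using h
    | true =>
      obtain ⟨h1, h2, ha⟩ := adjb_sound hes hb
      exact ih _ _ ((stepf_sound t h1 h2 ha).trans h)

lemma tmpl_sound {es : List (ℕ × ℕ)} (hes : Edges G es) (r : Fin 8) (k n : ℕ) (c : ℕ → ℕ)
    (h : ltLe (tmpl es r k n) (lst c)) : R G (fun i : Fin 8 => c i) (Pi.single r k) := by
  have h1 := ltLe_lst rfl h
  refine (bld_sound hes 11 n (sgl r k) (R.of_le ?_)).mono h1 le_rfl
  intro i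
  rcases eq_or_ne i r with rfl | hi
  · simp [sgl]
  · simp [hi]

lemma lst_sum (c : ℕ → ℕ) : (lst c).sum = ∑ i : Fin 8, c i := by
  simp [lst, Fin.sum_univ_eight]; ring

/-- Extension of a vector to `ℕ`. -/
def ext8 (c : Fin 8 → ℕ) (i : ℕ) : ℕ := if h : i < 8 then c ⟨i, h⟩ else 0

lemma ext8_val (c : Fin 8 → ℕ) : (fun i : Fin 8 => ext8 c i) = c := by
  funext i; simp [ext8]

lemma ext8_apply (c : Fin 8 → ℕ) (i : Fin 8) : ext8 c i = c i := by
  simp [ext8]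

lemma supp_lst (c : ℕ → ℕ) : supp (lst c) = ∑ i : Fin 8, min (c i) 1 := by
  simp [lst, supp, Fin.sum_univ_eight]; ring

lemma tmpl_eq (es : List (ℕ × ℕ)) (r k n : ℕ) :
    tmpl es r k n = lst (bld es 11 n (sgl r k)) := rfl

lemma chk_sound {es : List (ℕ × ℕ)} (hes : Edges G es) (r : Fin 8) (C : Cert)
    (h : chk es r C = true) : Nice G r := by
  simp only [chk, Bool.and_eq_true] at h
  obtain ⟨⟨⟨hS, hE⟩, h1⟩, h2⟩ := h
  have one : ∀ c : Fin 8 → ℕ, 8 ≤ ∑ g, c g → R G c (Pi.single r 1) := by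
    intro c hc
    obtain ⟨t, ht, hl⟩ := cov_sound 8 8 _ h1 (by simp [ts1, tmpl, lst]) (lst (ext8 c))
      (by simp [lst]) (by rw [lst_sum, ext8_val]; exact hc)
    obtain ⟨n, -, rfl⟩ := List.mem_map.1 ht
    have := tmpl_sound hes r 1 n _ hl
    rwa [ext8_val] at this
  refine ⟨one, fun i => C.E.getD i 0, ?_⟩
  simp only [chkShape, Bool.and_eq_true, Nat.beq_eq, Nat.blt, List.all_eq_true, List.mem_range,
    Bool.or_eq_true] at hS
  obtain ⟨⟨⟨⟨hlen, hz⟩, hz9⟩, hle⟩, hV⟩ := hS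
  have hz := Nat.le_of_ble_eq_true hz
  have hElst : C.E = lst (fun i => C.E.getD i 0) := by
    match hCE : C.E, hlen with
    | [a, b, c, d, e, f, g, i], _ => simp [lst]
  refine ⟨⟨C.z, hz⟩, hz9, ?_, ?_, ?_⟩
  · intro g hg
    rcases hle g g.2 with h | h
    · exact absurd (Fin.ext h) hg
    · exact Nat.le_of_ble_eq_true h
  · rw [hElst] at hV
    simp only [lst, List.map_cons, List.map_nil, List.sum_cons, List.sum_nil] at hV
    simp only [vv, Fin.sum_univ_eight]
    simpa [add_assoc] using hV
  · intro c hc hcE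
    obtain ⟨e, -, he, hes9⟩ := exists_between 0 (fun g => (c g + 1) / 2) (fun _ => Nat.zero_le _) 9
      (by simp) hc
    obtain ⟨t, ht, hl, hsz⟩ := cov2_sound 8 9 0 _ h2 (by
        intro t ht
        simp only [List.mem_append] at ht
        rcases ht with ht | ht | ht
        · obtain ⟨n, -, rfl⟩ := List.mem_map.1 ht; simp [tmpl, lst]
        · obtain ⟨n, -, rfl⟩ := List.mem_map.1 ht; simp [tmpl, lst]
        · unfold tsE at ht
          cases hb : C.cE.isEmpty <;> simp [hb] at ht
          subst ht; exact hlen) (lst (ext8 e)) (by simp [lst])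
        (by rw [lst_sum, ext8_val]; exact hes9)
    have hmap : (lst (ext8 e)).map (fun e => 2 * e - 1) = lst (fun i => 2 * ext8 e i - 1) := by
      simp [lst]
    rw [hmap] at hl
    have hec : ∀ i : Fin 8, 2 * e i - 1 ≤ c i := by
      intro i
      have : e i ≤ (c i + 1) / 2 := he i
      omega
    simp only [List.mem_append] at ht
    rcases ht with ht | ht | ht
    · obtain ⟨n, -, rfl⟩ := List.mem_map.1 ht
      have hl' := hl
      rw [tmpl_eq] at hl'
      have h3 := ltLe_lst rfl hl'
      simp only [ext8_apply] at h3
      set t := bld es 11 n (sgl r 1) with ht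
      have h4 := tmpl_sound hes r 1 n t (by
        rw [tmpl_eq]; exact leB_le (by simp [leB, lst, ht]))
      have h5 := one (fun i => (2 * e i - 1) - t i) (by
        simp only [tmpl_eq, lst_sum, supp_lst, ext8_apply] at hsz
        have : ∑ i : Fin 8, ((2 * e i - 1) - t i) + ∑ i : Fin 8, t i + ∑ i : Fin 8, min (e i) 1
            = 2 * ∑ i, e i := by
          rw [← Finset.sum_add_distrib, ← Finset.sum_add_distrib, Finset.mul_sum]
          refine Finset.sum_congr rfl fun i _ => ?_
          have := h3 i
          omega
        rw [← ht] at hsz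
        omega)
      have h6 := h4.add h5
      rw [← Pi.single_add] at h6
      refine h6.mono ?_ le_rfl
      intro i
      have := h3 i
      have := hec i
      simp only [Pi.add_apply]
      omega
    · obtain ⟨n, -, rfl⟩ := List.mem_map.1 ht
      refine (tmpl_sound hes r 2 n _ hl).mono ?_ le_rfl
      intro i
      simpa [ext8_apply] using hec i
    · unfold tsE at ht
      cases hb : C.cE.isEmpty
      · simp only [hb, cond_false, List.mem_singleton] at ht
        subst ht
        have h3 := ltLe_lst hElst hl
        have h4 : ∀ i : Fin 8, C.E.getD i 0 ≤ c i := fun i =>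
          (h3 i).trans (by simpa [ext8_apply] using hec i)
        have : ∃ v : Fin 8, C.E.getD v 0 ≠ c v := by
          by_contra! hcon
          exact hcE (funext fun i => (hcon i).symm)
        obtain ⟨v, hv⟩ := this
        simp only [chkE, hb, Bool.false_or, List.all_eq_true, List.mem_range] at hE
        obtain ⟨n, -, hn⟩ := List.any_eq_true.1 (hE v v.2)
        refine (tmpl_sound hes r 2 n _ (leB_le hn)).mono ?_ le_rfl
        intro i
        have := h4 i
        rcases eq_or_ne i v with rfl | hi
        · simp only [sgl, Nat.beq_refl, cond_true]; omega
        · have hi' : (i : ℕ) ≠ v := fun h => hi (Fin.ext h)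
          have : Nat.beq i v = false := by
            rw [Bool.eq_false_iff]; simpa using hi'
          simp only [sgl, this, cond_false]; omega
      · simp [hb] at ht

lemma chkAll_sound {es : List (ℕ × ℕ)} (hes : Edges G es) (Cs : List Cert)
    (h : chkAll es 0 Cs = true) (hl : Cs.length = 8) (r : Fin 8) : Nice G r := by
  match Cs, hl with
  | [a, b, c, d, e, f, g, i], _ =>
    simp only [chkAll, Bool.and_eq_true] at h
    obtain ⟨h0, h1, h2, h3, h4, h5, h6, h7, -⟩ := h
    fin_cases r
    exacts [chk_sound hes 0 _ h0, chk_sound hes 1 _ h1, chk_sound hes 2 _ h2,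
      chk_sound hes 3 _ h3, chk_sound hes 4 _ h4, chk_sound hes 5 _ h5, chk_sound hes 6 _ h6,
      chk_sound hes 7 _ h7]

def esL : List (ℕ × ℕ) := [(0, 1), (0, 2), (1, 3), (2, 4), (2, 5), (2, 6), (3, 4), (3, 5), (3, 6),
  (3, 7), (4, 7), (5, 7), (6, 7)]

def esL1 : List (ℕ × ℕ) := [(0, 1), (0, 2), (1, 2), (1, 3), (2, 4), (2, 5), (2, 6), (3, 4), (3, 7),
  (4, 7), (5, 7), (6, 7)]

def esL2 : List (ℕ × ℕ) := [(0, 1), (0, 2), (1, 3), (2, 4), (2, 5), (2, 6), (3, 4), (3, 6), (3, 7),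
  (4, 5), (4, 7), (5, 6), (5, 7), (6, 7)]

def dataL : List Cert :=
  [⟨[0, 10, 20, 3110, 4220, 5220, 6220, 313110, 433110, 533110, 633110, 733110, 424220, 524220,
    624220, 525220, 625220, 755220, 626220, 366220, 73313110, 73733110, 74424220, 74524220,
    35524220, 74624220, 36624220, 76624220, 74744220, 35525220, 35625220, 36625220, 76625220,
    36626220, 76626220, 7373313110, 7474424220, 7474524220, 7574524220, 7474624220, 7674624220,
    7635625220, 7675625220, 737373313110, 747474424220, 757474524220, 767474624220,
    73737373313110], [767362312010], [7574524220, 7574735242312010, 7675746252422020,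
    75747373524231312010, 75737373524231312010, 74737373524231312010, 74737373624231312010,
    7574737373524231312010], [0, 0, 0, 1, 1, 1, 1, 9], 7⟩,
   ⟨[0, 1, 31, 2001, 4331, 5331, 6331, 7331, 202001, 422001, 522001, 622001, 434331, 534331,
    634331, 734331, 535331, 635331, 735331, 636331, 736331, 266331, 737331, 76622001, 25534331,
    26634331, 25535331, 25635331, 26635331, 25735331, 26636331, 26736331], [], [], [9, 1, 1, 1,
    1, 0, 0, 0], 0⟩,
   ⟨[0, 2, 42, 52, 62, 1002, 3442, 7442, 3552, 7552, 101002, 343442, 743442, 747442, 133662],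
    [], [], [9, 1, 1, 1, 1, 0, 0, 0], 0⟩,
   ⟨[0, 13, 43, 53, 63, 73, 113, 2443, 2553, 10113, 242443, 22663], [], [], [9, 1, 1, 1, 1, 0,
    0, 0], 0⟩,
   ⟨[0, 24, 34, 74, 224, 1334, 5334, 6334, 5774, 6774, 100224, 20224, 520224, 620224, 525224,
    625224, 626224, 11334, 131334, 531334, 631334, 2100224, 13011334], [], [], [9, 1, 1, 1, 1,
    0, 0, 0], 0⟩,
   ⟨[0, 25, 35, 75, 225, 1335, 4335, 6335, 4775, 6775, 100225, 20225, 420225, 620225, 424225,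
    624225, 626225, 11335, 131335, 431335, 631335, 2100225, 13011335], [], [], [9, 1, 1, 1, 1,
    0, 0, 0], 0⟩,
   ⟨[0, 26, 36, 76, 226, 1336, 4336, 5336, 4776, 5776, 100226, 20226, 420226, 520226, 424226,
    524226, 525226, 11336, 131336, 431336, 531336, 2100226, 13011336], [], [], [9, 1, 1, 1, 1,
    0, 0, 0], 0⟩,
   ⟨[0, 37, 47, 57, 67, 1337, 2447, 2557, 11337, 131337, 242447, 22557, 1011337, 13011337,
    2022447, 24022447, 2022557, 10022667, 2022667, 1301011337, 2402022447, 210022667,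
    11301011337, 22402022447, 1011301011337], [22667011337], [], [9, 1, 1, 1, 1, 0, 0, 0], 0⟩]

def dataL1 : List Cert :=
  [⟨[0, 10, 20, 3110, 4220, 5220, 6220, 313110, 433110, 733110, 424220, 524220, 624220, 344220,
    525220, 625220, 626220, 766220, 43313110, 73313110, 73733110, 57733110, 67733110, 34424220,
    34524220, 75524220, 34624220, 76624220, 74744220, 75525220, 75625220, 76625220, 76626220,
    7373313110, 7474424220, 7474524220, 7574524220, 7634624220, 7474624220, 7674624220,
    7675625220, 3776625220, 3776626220, 737373313110, 747474424220, 757474524220, 767474624220,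
    73737373313110], [767362312010], [7574524220, 7574735242312010, 7675746252422020,
    75747373524231312010, 75737373524231312010, 74737373524231312010, 74737373624231312010,
    7574737373524231312010], [0, 0, 0, 1, 1, 1, 1, 9], 7⟩,
   ⟨[0, 1, 21, 31, 4221, 5221, 6221, 4331, 7331, 424221, 524221, 624221, 525221, 625221,
    626221, 766221, 734331, 737331, 577331, 677331, 76625221, 76626221, 57737331, 67737331], [],
    [], [9, 1, 1, 1, 1, 0, 0, 0], 0⟩,
   ⟨[0, 2, 12, 42, 52, 62, 3112, 3442, 7552, 7662, 313112, 747442], [], [], [9, 1, 1, 1, 1, 0,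
    0, 0], 0⟩,
   ⟨[0, 13, 43, 73, 113, 2113, 2443, 5773, 6773, 10113, 210113, 212113, 22443, 522443, 622443,
    575773, 675773, 676773, 52210113, 62210113, 52022443, 62022443, 26675773, 67266773], [], [],
    [9, 1, 1, 1, 1, 0, 0, 0], 0⟩,
   ⟨[0, 24, 34, 74, 224, 1224, 5224, 6224, 1334, 5774, 6774, 20224, 120224, 520224, 620224,
    121224, 521224, 621224, 525224, 625224, 626224, 11334], [], [], [9, 1, 1, 1, 1, 0, 0, 0], 0⟩,
   ⟨[0, 25, 75, 225, 1225, 4225, 6225, 3775, 4775, 6775, 20225, 120225, 420225, 620225, 121225,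
    421225, 621225, 424225, 624225, 344225, 626225, 133775, 373775, 473775, 673775, 31120225,
    34420225, 34421225, 1133775, 37133775], [], [], [9, 1, 1, 1, 1, 0, 0, 0], 0⟩,
   ⟨[0, 26, 76, 226, 1226, 4226, 5226, 3776, 4776, 5776, 20226, 120226, 420226, 520226, 121226,
    421226, 521226, 424226, 524226, 344226, 525226, 133776, 373776, 473776, 573776, 31120226,
    34420226, 34421226, 1133776, 37133776], [], [], [9, 1, 1, 1, 1, 0, 0, 0], 0⟩,
   ⟨[0, 37, 47, 57, 67, 1337, 2447, 2557, 11337, 131337, 122447, 242447, 22667, 1011337,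
    13211337, 2022447, 24122447, 2022557, 12022557, 2022667, 12022667, 1301011337, 2402022447,
    11301011337, 22402022447, 1011301011337], [22667011337], [], [9, 1, 1, 1, 1, 0, 0, 0], 0⟩]

def dataL2 : List Cert :=
  [⟨[0, 10, 20, 3110, 4220, 5220, 6220, 313110, 433110, 633110, 733110, 424220, 524220, 624220,
    525220, 625220, 755220, 626220, 366220, 73313110, 73733110, 57733110, 34424220, 34524220,
    75524220, 34624220, 36624220, 76624220, 74744220, 75525220, 75625220, 36625220, 76625220,
    36626220, 76626220, 7373313110, 7474424220, 7474524220, 7574524220, 7474624220, 7674624220,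
    3675625220, 7675625220, 737373313110, 747474424220, 757474524220, 767474624220,
    73737373313110], [767362312010], [7574524220, 7574735242312010, 7675746252422020,
    75747373524231312010, 75737373524231312010, 74737373524231312010, 74737373624231312010,
    7574737373524231312010], [0, 0, 0, 1, 1, 1, 1, 9], 7⟩,
   ⟨[0, 1, 31, 2001, 4331, 6331, 7331, 202001, 422001, 522001, 622001, 434331, 634331, 734331,
    636331, 736331, 266331, 737331, 577331, 52202001, 52522001, 76622001, 24434331, 24634331,
    26634331, 56634331, 24734331, 57734331, 54544331, 26636331, 56636331, 26736331, 56736331,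
    57736331, 57737331, 5252202001, 5454434331, 5454634331, 5654634331, 5454734331, 5754734331,
    5726736331, 5756736331, 525252202001, 545454434331, 565454634331, 575454734331,
    52525252202001], [566352312001], [5654634352312001, 5654634331, 56546343525231202001,
    5756547363433131, 56634352525231202001, 5654634352525231202001, 54634352525231202001,
    54734352525231202001], [0, 0, 1, 0, 1, 9, 1, 1], 5⟩,
   ⟨[0, 2, 42, 52, 62, 1002, 3442, 7442, 7552, 101002, 343442, 743442, 747442, 377552, 133662],
    [], [], [9, 1, 1, 1, 1, 0, 0, 0], 0⟩,
   ⟨[0, 13, 43, 63, 73, 113, 2443, 5443, 5773, 10113, 242443, 542443, 545443, 22663, 255773],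
    [], [], [9, 1, 1, 1, 1, 0, 0, 0], 0⟩,
   ⟨[0, 24, 34, 54, 74, 224, 1334, 6554, 6774, 100224, 20224, 626224, 11334, 131334, 2100224,
    13011334], [], [], [9, 1, 1, 1, 1, 0, 0, 0], 0⟩,
   ⟨[0, 25, 45, 65, 75, 225, 3445, 3665, 100225, 20225, 343445, 133665, 10100225, 2100225,
    13133445, 34133445, 13133665, 1133775, 13133775, 210100225, 3413133445, 1301133775,
    100210100225, 133413133445, 10100210100225], [133665100225], [], [9, 1, 1, 1, 1, 0, 0, 0],
    0⟩,
   ⟨[0, 26, 36, 56, 76, 226, 1336, 4556, 4776, 100226, 20226, 424226, 11336, 131336, 2100226,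
    13011336], [], [], [9, 1, 1, 1, 1, 0, 0, 0], 0⟩,
   ⟨[0, 37, 47, 57, 67, 1337, 2447, 2557, 11337, 131337, 242447, 22557, 1011337, 13011337,
    2022447, 24022447, 2022557, 10022667, 2022667, 1301011337, 2402022447, 210022667,
    11301011337, 22402022447, 1011301011337], [22667011337], [], [9, 1, 1, 1, 1, 0, 0, 0], 0⟩]

theorem chkL : chkAll esL 0 dataL = true := by decide +kernel

theorem chkL1 : chkAll esL1 0 dataL1 = true := by decide +kernel

theorem chkL2 : chkAll esL2 0 dataL2 = true := by decide +kernel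

theorem niceL (r : Fin 8) : Nice lemkeL r :=
  chkAll_sound (es := esL) (by unfold Edges lemkeL esL; simp [SimpleGraph.fromRel_adj]) _
    chkL rfl r

theorem niceL1 (r : Fin 8) : Nice lemkeL1 r :=
  chkAll_sound (es := esL1) (by unfold Edges lemkeL1 esL1; simp [SimpleGraph.fromRel_adj]) _
    chkL1 rfl r

theorem niceL2 (r : Fin 8) : Nice lemkeL2 r :=
  chkAll_sound (es := esL2) (by unfold Edges lemkeL2 esL2; simp [SimpleGraph.fromRel_adj]) _
    chkL2 rfl r

end Checker

/-! ### Arithmetic at a single position -/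

section Arith

lemma ceil_even (b q : ℕ) : (b + 2 * q + 1) / 2 = (b + 1) / 2 + q := by omega

lemma ceil_odd (b q : ℕ) (hb : ¬ b % 2 = 1) :
    (b + (2 * q + 1) + 1) / 2 = (b + 1) / 2 + q + 1 := by
  omega

lemma ceil_odd' (b q : ℕ) : (b + 1) / 2 + q ≤ (b + (2 * q + 1) + 1) / 2 := by omega

lemma ceil_odd_k (b q k : ℕ) (h : k = 0 ∨ (k = 1 ∧ b + (2 * q + 1) = 9)) :
    (b + 1) / 2 + q + k ≤ (b + (2 * q + 1) + 1) / 2 := by omega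

lemma ceil_le_self (b : ℕ) : (b + 1) / 2 ≤ b := by omega

lemma one_le_odd (q : ℕ) : 1 ≤ 2 * q + 1 := by omega

lemma k_le1 {k b m : ℕ} (h : k = 0 ∨ (k = 1 ∧ b + m = 9)) : k ≤ 1 := by omega

lemma k_two {k b : ℕ} (h : k = 0 ∨ (k = 1 ∧ b + 2 * 1 = 9)) : 3 * k ≤ b / 2 := by omega

lemma k_one {k b : ℕ} (h : k = 0 ∨ (k = 1 ∧ b + (2 * 0 + 1) = 9)) : 4 * k ≤ b / 2 := by omega

lemma k_four {k b q : ℕ} (h : k = 0 ∨ (k = 1 ∧ b + 2 * q = 9)) (hb : ¬ b % 2 = 1) : k = 0 := by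
  omega

lemma k_big {k b q : ℕ} (h : k = 0 ∨ (k = 1 ∧ b + 2 * q = 9)) (hq : 5 ≤ q) : k = 0 := by
  omega

lemma k_zero_or {k b m l : ℕ} (h : k = 0 ∨ (k = 1 ∧ b + m = 9)) (hb : b + 4 * l ≤ 7)
    (hm : ¬ 2 + 4 * l ≤ m) : k = 0 := by omega

lemma k_ceil {k b q : ℕ} (h : k = 0 ∨ (k = 1 ∧ b + 2 * q = 9)) (hq : q < 5) :
    (b + 1) / 2 + k * (4 - q) ≤ b := by
  rcases h with rfl | ⟨rfl, h⟩
  · omega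
  · omega

lemma bump_one (b : ℕ) : (b + 1) / 2 ≤ (b + 1 + 1) / 2 := by omega

lemma bump_one_even {b : ℕ} (h : ¬ b % 2 = 1) : (b + 1) / 2 + 1 = (b + 1 + 1) / 2 := by omega

lemma ptB (b0 b1 b2 b3 m γ : ℕ)
    (hγ : 1 ≤ m → (b0 % 2 = 1 ∨ b1 % 2 = 1 ∨ b2 % 2 = 1 ∨ b3 % 2 = 1) → γ = 1) :
    (b0 + 1) / 2 + (b1 + 1) / 2 + (b2 + 1) / 2 + (b3 + 1) / 2 + m ≤
      γ + ((b0 + m + 1) / 2 + (b1 + m + 1) / 2 + (b2 + m + 1) / 2 + (b3 + m + 1) / 2) := by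
  obtain ⟨q, rfl | rfl⟩ := Nat.even_or_odd' m
  · simp only [ceil_even]
    clear hγ
    linarith
  · by_cases ho : b0 % 2 = 1 ∨ b1 % 2 = 1 ∨ b2 % 2 = 1 ∨ b3 % 2 = 1
    · have hg := hγ (one_le_odd q) ho
      have h0 := ceil_odd' b0 q
      have h1 := ceil_odd' b1 q
      have h2 := ceil_odd' b2 q
      have h3 := ceil_odd' b3 q
      clear hγ ho
      linarith
    · simp only [not_or] at ho
      obtain ⟨o0, o1, o2, o3⟩ := ho
      rw [ceil_odd b0 q o0, ceil_odd b1 q o1, ceil_odd b2 q o2, ceil_odd b3 q o3]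
      clear hγ o0 o1 o2 o3
      linarith

/-- Slack one when a pair can be moved onto an even position. -/
lemma ptB_one (b0 b1 b2 b3 γ : ℕ)
    (hγ : (b0 % 2 = 1 ∨ b1 % 2 = 1 ∨ b2 % 2 = 1 ∨ b3 % 2 = 1) → γ = 1)
    (h : ¬ b0 % 2 = 1 ∨ ¬ b1 % 2 = 1 ∨ ¬ b2 % 2 = 1 ∨ ¬ b3 % 2 = 1) :
    (b0 + 1) / 2 + (b1 + 1) / 2 + (b2 + 1) / 2 + (b3 + 1) / 2 + 1 + 1 ≤
      γ + ((b0 + 1 + 1) / 2 + (b1 + 1 + 1) / 2 + (b2 + 1 + 1) / 2 + (b3 + 1 + 1) / 2) := by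
  have h0 := bump_one b0
  have h1 := bump_one b1
  have h2 := bump_one b2
  have h3 := bump_one b3
  by_cases ho : b0 % 2 = 1 ∨ b1 % 2 = 1 ∨ b2 % 2 = 1 ∨ b3 % 2 = 1
  · have hg := hγ ho
    clear hγ ho
    rcases h with h | h | h | h <;> have := bump_one_even h <;> clear h <;> linarith
  · simp only [not_or] at ho
    obtain ⟨o0, o1, o2, o3⟩ := ho
    have := bump_one_even o0
    have := bump_one_even o1
    have := bump_one_even o2
    have := bump_one_even o3
    clear hγ h o0 o1 o2 o3
    linarith

lemma ptBz (b0 b1 b2 b3 m γ k0 k1 k2 k3 l : ℕ)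
    (hγ : 1 ≤ m → (b0 % 2 = 1 ∨ b1 % 2 = 1 ∨ b2 % 2 = 1 ∨ b3 % 2 = 1) → γ = 1)
    (h0 : k0 = 0 ∨ (k0 = 1 ∧ b0 + m = 9)) (h1 : k1 = 0 ∨ (k1 = 1 ∧ b1 + m = 9))
    (h2 : k2 = 0 ∨ (k2 = 1 ∧ b2 + m = 9)) (h3 : k3 = 0 ∨ (k3 = 1 ∧ b3 + m = 9))
    (hl : 4 * l ≤ m) (hm : 1 ≤ m ∨ k0 + k1 + k2 + k3 = 0)
    (hs : b0 / 2 + b1 / 2 + b2 / 2 + b3 / 2 ≤ 7) :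
    (b0 + 1) / 2 + (b1 + 1) / 2 + (b2 + 1) / 2 + (b3 + 1) / 2 + m + (k0 + k1 + k2 + k3 + l) ≤
      γ + ((b0 + m + 1) / 2 + (b1 + m + 1) / 2 + (b2 + m + 1) / 2 + (b3 + m + 1) / 2) := by
  have f0 := k_le1 h0
  have f1 := k_le1 h1
  have f2 := k_le1 h2
  have f3 := k_le1 h3
  obtain ⟨q, rfl | rfl⟩ := Nat.even_or_odd' m
  · simp only [ceil_even]
    suffices k0 + k1 + k2 + k3 + l ≤ γ + 2 * q by
      clear hγ h0 h1 h2 h3 hs hm; linarith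
    rcases Nat.lt_or_ge q 3 with hq | hq
    · have hq : q = 0 ∨ q = 1 ∨ q = 2 := by
        clear hγ h0 h1 h2 h3 hs hm hl; omega
      rcases hq with rfl | rfl | rfl
      · clear hγ h0 h1 h2 h3 hs; omega
      · have e0 := k_two h0
        have e1 := k_two h1
        have e2 := k_two h2
        have e3 := k_two h3
        generalize b0 / 2 = a0 at *
        generalize b1 / 2 = a1 at *
        generalize b2 / 2 = a2 at *
        generalize b3 / 2 = a3 at *
        clear hγ h0 h1 h2 h3 hm
        omega
      · clear hm hs
        by_cases ho : b0 % 2 = 1 ∨ b1 % 2 = 1 ∨ b2 % 2 = 1 ∨ b3 % 2 = 1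
        · have hg := hγ (by norm_num) ho
          clear hγ h0 h1 h2 h3 ho
          omega
        · simp only [not_or] at ho
          obtain ⟨o0, o1, o2, o3⟩ := ho
          have e0 := k_four h0 o0
          have e1 := k_four h1 o1
          have e2 := k_four h2 o2
          have e3 := k_four h3 o3
          clear hγ h0 h1 h2 h3 o0 o1 o2 o3
          omega
    · clear hγ h0 h1 h2 h3 hs hm
      omega
  · clear hm
    by_cases ho : b0 % 2 = 1 ∨ b1 % 2 = 1 ∨ b2 % 2 = 1 ∨ b3 % 2 = 1
    · have hg := hγ (one_le_odd q) ho
      have e0 := ceil_odd_k b0 q k0 h0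
      have e1 := ceil_odd_k b1 q k1 h1
      have e2 := ceil_odd_k b2 q k2 h2
      have e3 := ceil_odd_k b3 q k3 h3
      have hl' : l ≤ 2 * q := by clear hγ ho h0 h1 h2 h3 hs e0 e1 e2 e3; omega
      clear hγ ho h0 h1 h2 h3 hs
      linarith
    · simp only [not_or] at ho
      obtain ⟨o0, o1, o2, o3⟩ := ho
      rw [ceil_odd b0 q o0, ceil_odd b1 q o1, ceil_odd b2 q o2, ceil_odd b3 q o3]
      suffices k0 + k1 + k2 + k3 + l ≤ 2 * q + 3 by
        clear hγ h0 h1 h2 h3 hs o0 o1 o2 o3; linarith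
      clear hγ o0 o1 o2 o3
      rcases Nat.eq_zero_or_pos q with rfl | hq
      · have e0 := k_one h0
        have e1 := k_one h1
        have e2 := k_one h2
        have e3 := k_one h3
        generalize b0 / 2 = a0 at *
        generalize b1 / 2 = a1 at *
        generalize b2 / 2 = a2 at *
        generalize b3 / 2 = a3 at *
        clear h0 h1 h2 h3
        omega
      · clear h0 h1 h2 h3 hs
        omega

lemma ptA (b0 b1 b2 b3 m γ : ℕ)
    (hγ : 1 ≤ m → (b0 % 2 = 1 ∨ b1 % 2 = 1 ∨ b2 % 2 = 1 ∨ b3 % 2 = 1) → γ = 1) :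
    4 * ((b0 + 1) / 2 + (b1 + 1) / 2 + (b2 + 1) / 2 + (b3 + 1) / 2 + m) ≤
      4 * γ + 3 * ((b0 + m + 1) / 2 + (b1 + m + 1) / 2 + (b2 + m + 1) / 2 + (b3 + m + 1) / 2)
      + (b0 + b1 + b2 + b3) := by
  have c0 := ceil_le_self b0
  have c1 := ceil_le_self b1
  have c2 := ceil_le_self b2
  have c3 := ceil_le_self b3
  obtain ⟨q, rfl | rfl⟩ := Nat.even_or_odd' m
  · simp only [ceil_even]
    clear hγ
    linarith
  · by_cases ho : b0 % 2 = 1 ∨ b1 % 2 = 1 ∨ b2 % 2 = 1 ∨ b3 % 2 = 1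
    · have hg := hγ (one_le_odd q) ho
      have h0 := ceil_odd' b0 q
      have h1 := ceil_odd' b1 q
      have h2 := ceil_odd' b2 q
      have h3 := ceil_odd' b3 q
      clear hγ ho
      linarith
    · simp only [not_or] at ho
      obtain ⟨o0, o1, o2, o3⟩ := ho
      rw [ceil_odd b0 q o0, ceil_odd b1 q o1, ceil_odd b2 q o2, ceil_odd b3 q o3]
      clear hγ o0 o1 o2 o3
      linarith

lemma ptAz (b0 b1 b2 b3 m γ k0 k1 k2 k3 l ρ : ℕ)
    (hγ : 1 ≤ m → (b0 % 2 = 1 ∨ b1 % 2 = 1 ∨ b2 % 2 = 1 ∨ b3 % 2 = 1) → γ = 1)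
    (h0 : k0 = 0 ∨ (k0 = 1 ∧ b0 + m = 9)) (h1 : k1 = 0 ∨ (k1 = 1 ∧ b1 + m = 9))
    (h2 : k2 = 0 ∨ (k2 = 1 ∧ b2 + m = 9)) (h3 : k3 = 0 ∨ (k3 = 1 ∧ b3 + m = 9))
    (hl : 4 * l ≤ m) (hb0 : b0 + 4 * l ≤ 7) (hb1 : b1 + 4 * l ≤ 7) (hb2 : b2 + 4 * l ≤ 7)
    (hb3 : b3 + 4 * l ≤ 7) (hρ : ρ = 0 ∨ (ρ = 1 ∧ 5 + 4 * l ≤ m)) :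
    4 * ((b0 + 1) / 2 + (b1 + 1) / 2 + (b2 + 1) / 2 + (b3 + 1) / 2 + m) +
      (4 * l + 3 * (k0 + k1 + k2 + k3) + 4 * ρ) ≤
      4 * γ + 3 * ((b0 + m + 1) / 2 + (b1 + m + 1) / 2 + (b2 + m + 1) / 2 + (b3 + m + 1) / 2)
      + (b0 + b1 + b2 + b3) := by
  have hl1 : l ≤ 1 := by clear h0 h1 h2 h3 hb1 hb2 hb3 hρ hγ; omega
  have f0 := k_le1 h0
  have f1 := k_le1 h1
  have f2 := k_le1 h2
  have f3 := k_le1 h3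
  have pK : k0 + k1 + k2 + k3 = 0 ∨ 2 + 4 * l ≤ m := by
    by_cases hm : 2 + 4 * l ≤ m
    · exact Or.inr hm
    · left
      rw [k_zero_or h0 hb0 hm, k_zero_or h1 hb1 hm, k_zero_or h2 hb2 hm, k_zero_or h3 hb3 hm]
  clear hb0 hb1 hb2 hb3
  have c0 := ceil_le_self b0
  have c1 := ceil_le_self b1
  have c2 := ceil_le_self b2
  have c3 := ceil_le_self b3
  obtain ⟨q, rfl | rfl⟩ := Nat.even_or_odd' m
  · simp only [ceil_even]
    rcases Nat.lt_or_ge q 5 with hq | hq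
    · have e0 := k_ceil h0 hq
      have e1 := k_ceil h1 hq
      have e2 := k_ceil h2 hq
      have e3 := k_ceil h3 hq
      clear h0 h1 h2 h3 hγ
      generalize (b0 + 1) / 2 = a0 at *
      generalize (b1 + 1) / 2 = a1 at *
      generalize (b2 + 1) / 2 = a2 at *
      generalize (b3 + 1) / 2 = a3 at *
      interval_cases q <;> rcases hρ with rfl | ⟨rfl, hρ⟩ <;> omega
    · have e0 := k_big h0 hq
      have e1 := k_big h1 hq
      have e2 := k_big h2 hq
      have e3 := k_big h3 hq
      clear h0 h1 h2 h3 hγ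
      generalize (b0 + 1) / 2 = a0 at *
      generalize (b1 + 1) / 2 = a1 at *
      generalize (b2 + 1) / 2 = a2 at *
      generalize (b3 + 1) / 2 = a3 at *
      omega
  · by_cases ho : b0 % 2 = 1 ∨ b1 % 2 = 1 ∨ b2 % 2 = 1 ∨ b3 % 2 = 1
    · have hg := hγ (one_le_odd q) ho
      have e0 := ceil_odd_k b0 q k0 h0
      have e1 := ceil_odd_k b1 q k1 h1
      have e2 := ceil_odd_k b2 q k2 h2
      have e3 := ceil_odd_k b3 q k3 h3
      have key : l + ρ ≤ q := by
        clear hγ ho h0 h1 h2 h3 pK e0 e1 e2 e3 c0 c1 c2 c3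
        omega
      clear hγ ho h0 h1 h2 h3 pK hl hρ
      linarith
    · simp only [not_or] at ho
      obtain ⟨o0, o1, o2, o3⟩ := ho
      rw [ceil_odd b0 q o0, ceil_odd b1 q o1, ceil_odd b2 q o2, ceil_odd b3 q o3]
      clear hγ o0 o1 o2 o3 h0 h1 h2 h3
      have key : 4 * l + 3 * (k0 + k1 + k2 + k3) + 4 * ρ ≤ 4 * q + 8 := by
        clear c0 c1 c2 c3
        omega
      clear pK hl hρ
      linarith

end Arith

/-! ### Configurations on a product -/

section Product

variable {G : SimpleGraph (Fin 8)} {H : Type*} [DecidableEq H] {K : SimpleGraph H}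

/-- The configuration `f` placed on the layer `h` of the product. -/
def emb (h : H) (f : Fin 8 → ℕ) : Fin 8 × H → ℕ := push (fun g => (g, h)) f

/-- Pointwise half. -/
def half (f : Fin 8 → ℕ) : Fin 8 → ℕ := fun g => f g / 2

lemma emb_add (h : H) (f f' : Fin 8 → ℕ) : emb h (f + f') = emb h f + emb h f' :=
  push_add _ _ _

lemma emb_mono (h : H) {f f' : Fin 8 → ℕ} (hf : f ≤ f') : emb h f ≤ emb h f' :=
  push_mono _ hf

lemma emb_single (h : H) (r : Fin 8) (k : ℕ) : emb h (Pi.single r k) = Pi.single (r, h) k :=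
  push_single _ _ _

lemma emb_sum {ι : Type*} (h : H) (s : Finset ι) (f : ι → Fin 8 → ℕ) :
    emb h (∑ i ∈ s, f i) = ∑ i ∈ s, emb h (f i) :=
  push_sum _ _ _

lemma emb_lift (h : H) {c d : Fin 8 → ℕ} (hR : R G c d) :
    R (G.boxProd K) (emb h c) (emb h d) := by
  refine R.push _ ?_ hR
  intro v w hvw
  rw [SimpleGraph.boxProd_adj]
  exact Or.inl ⟨hvw, rfl⟩

lemma adj_right {h h' : H} (hh : K.Adj h h') (g : Fin 8) :
    (G.boxProd K).Adj (g, h) (g, h') := by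
  rw [SimpleGraph.boxProd_adj]
  exact Or.inr ⟨hh, rfl⟩

lemma emb_half {h h' : H} (hh : K.Adj h h') (f : Fin 8 → ℕ) :
    R (G.boxProd K) (emb h f) (emb h' (half f)) := by
  unfold emb Peb.push half
  exact R.sum _ fun g _ => R.half (adj_right hh g) (f g)

lemma emb_double {h h' : H} (hh : K.Adj h h') (e : Fin 8 → ℕ) :
    R (G.boxProd K) (emb h (e + e)) (emb h' e) := by
  refine (emb_half hh (e + e)).mono le_rfl (emb_mono _ ?_)
  intro g
  simp only [half, Pi.add_apply]
  omega

lemma add_le_sum_pair {ι M : Type*} [Fintype ι] [DecidableEq ι] (f : ι → M → ℕ) {i j : ι}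
    (hij : i ≠ j) : f i + f j ≤ ∑ k, f k := by
  rw [← Finset.sum_pair hij]
  exact Finset.sum_le_sum_of_subset (Finset.subset_univ _)

lemma le_sum_one {ι M : Type*} [Fintype ι] (f : ι → M → ℕ) (i : ι) : f i ≤ ∑ k, f k :=
  Finset.single_le_sum (f := f) (fun _ _ => bot_le) (Finset.mem_univ i)

/-- The whole configuration. -/
def conf (h0 : H) (b : Fin 4 → H) (a : Fin 3 → H) (x : Fin 8 → ℕ) (B : Fin 4 → Fin 8 → ℕ)
    (A : Fin 3 → Fin 8 → ℕ) : Fin 8 × H → ℕ :=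
  emb h0 x + ∑ j, emb (b j) (B j) + ∑ i, emb (a i) (A i)

lemma column {h0 : H} {b : Fin 4 → H} {a : Fin 3 → H} (hb : ∀ j, K.Adj (b j) h0)
    (hab : ∀ i j, K.Adj (a i) (b j)) (g : Fin 8) (x : ℕ) (B : Fin 4 → ℕ) (A : Fin 3 → ℕ) (γ : ℕ)
    (hγ : γ = 0 ∨ (γ = 1 ∧ ∃ i j, 2 ≤ A i ∧ B j % 2 = 1)) :
    R (G.boxProd K) (Pi.single (g, h0) x + ∑ j, Pi.single (g, b j) (B j) +
      ∑ i, Pi.single (g, a i) (A i)) (Pi.single (g, h0) (x + ∑ j, B j / 2 + γ)) := by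
  have key : ∀ B' : Fin 4 → ℕ, R (G.boxProd K) (∑ j, Pi.single (g, b j) (B' j))
      (Pi.single (g, h0) (∑ j, B' j / 2)) := by
    intro B'
    have := R.sum (G := G.boxProd K) Finset.univ fun j _ => R.half (adj_right (G := G) (hb j) g) (B' j)
    refine this.mono le_rfl (le_of_eq ?_)
    simp only [Fin.sum_univ_four, Pi.single_add]
  rcases hγ with rfl | ⟨rfl, i, j, hi, hj⟩
  · rw [add_zero, Pi.single_add]
    refine R.mono ((R.refl _).add (key B)) ?_ le_rfl
    exact le_add_of_nonneg_right bot_le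
  · have h1 : R (G.boxProd K) (∑ i, Pi.single (g, a i) (A i)) (Pi.single (g, b j) 1) := by
      refine (R.move (adj_right (G := G) (hab i j) g)).mono ?_ le_rfl
      refine le_trans (Pi.single_mono _ hi) ?_
      exact le_sum_one (fun i => Pi.single (M := fun _ : Fin 8 × H => ℕ) (g, a i) (A i)) i
    have h2 := key (B + Pi.single j 1)
    have e1 : ∑ k, Pi.single (M := fun _ : Fin 8 × H => ℕ) (g, b k) ((B + Pi.single j 1 : Fin 4 → ℕ) k) =
        ∑ k, Pi.single (g, b k) (B k) + Pi.single (g, b j) 1 := by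
      simp only [Pi.add_apply, Pi.single_add, Finset.sum_add_distrib]
      congr 1
      rw [Finset.sum_eq_single j]
      · simp
      · intro k _ hk
        simp [hk]
      · simp
    have e2 : ∑ k, (B + Pi.single j 1 : Fin 4 → ℕ) k / 2 = ∑ k, B k / 2 + 1 := by
      have : ∀ k, (B + Pi.single j 1 : Fin 4 → ℕ) k / 2 = B k / 2 + (Pi.single j 1 : Fin 4 → ℕ) k := by
        intro k
        by_cases hk : k = j
        · subst hk; simp; omega
        · simp [hk]
      simp only [this, Finset.sum_add_distrib]
      simp
    rw [e1, e2] at h2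
    rw [add_assoc x, Pi.single_add, add_assoc]
    exact (R.refl _).add (((R.refl _).add h1).trans h2)

/-- Good configurations reach two pebbles on the root. -/
def Good (E f : Fin 8 → ℕ) : Prop := 9 ≤ vv f ∧ f ≠ E

structure Setup (G : SimpleGraph (Fin 8)) (K : SimpleGraph H) (r : Fin 8) (E : Fin 8 → ℕ)
    (h0 : H) (b : Fin 4 → H) (a : Fin 3 → H) (x : Fin 8 → ℕ)
    (B : Fin 4 → Fin 8 → ℕ) (A : Fin 3 → Fin 8 → ℕ) : Prop where
  one : ∀ c : Fin 8 → ℕ, 8 ≤ ∑ g, c g → R G c (Pi.single r 1)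
  two : ∀ c : Fin 8 → ℕ, Good E c → R G c (Pi.single r 2)
  hb : ∀ j, K.Adj (b j) h0
  hab : ∀ i j, K.Adj (a i) (b j)
  uns : ¬ R (G.boxProd K) (conf h0 b a x B A) (Pi.single (r, h0) 1)

variable {r : Fin 8} {E : Fin 8 → ℕ} {h0 : H} {b : Fin 4 → H} {a : Fin 3 → H}
  {x : Fin 8 → ℕ} {B : Fin 4 → Fin 8 → ℕ} {A : Fin 3 → Fin 8 → ℕ}

lemma Setup.h1 (S : Setup G K r E h0 b a x B A) (γ : Fin 8 → ℕ)
    (hγ : ∀ g, γ g = 0 ∨ (γ g = 1 ∧ ∃ i j, 2 ≤ A i g ∧ B j g % 2 = 1)) :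
    ∑ g, (x g + ∑ j, B j g / 2 + γ g) ≤ 7 := by
  by_contra hc
  apply S.uns
  have h1 := R.sum Finset.univ fun g _ => column (G := G) S.hb S.hab g (x g) (fun j => B j g)
    (fun i => A i g) (γ g) (hγ g)
  have h2 := emb_lift (K := K) h0 (S.one (fun g => x g + ∑ j, B j g / 2 + γ g) (by omega))
  rw [emb_single] at h2
  refine R.trans ?_ h2
  refine h1.mono (le_of_eq ?_) le_rfl
  rw [Finset.sum_add_distrib, Finset.sum_add_distrib, Finset.sum_comm,
    Finset.sum_comm (α := Fin 3)]
  rfl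

/-- Two pebbles on `(r, b j)` suffice. -/
lemma Setup.fin_b (S : Setup G K r E h0 b a x B A) (j : Fin 4)
    (h : R (G.boxProd K) (∑ j, emb (b j) (B j) + ∑ i, emb (a i) (A i)) (Pi.single (r, b j) 2)) :
    False := by
  apply S.uns
  refine R.mono (h.trans (R.move (adj_right (S.hb j) r))) ?_ le_rfl
  rw [conf, add_assoc]
  exact le_add_of_nonneg_left bot_le

/-- Two pebbles on `(r, a i)` and one pebble on `(r, b j)` suffice. -/
lemma Setup.fin_ab (S : Setup G K r E h0 b a x B A) (i : Fin 3) (j : Fin 4)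
    (d d' : Fin 8 × H → ℕ) (h : R (G.boxProd K) d (Pi.single (r, a i) 2))
    (h' : R (G.boxProd K) d' (Pi.single (r, b j) 1))
    (hd : R (G.boxProd K) (∑ j, emb (b j) (B j) + ∑ i, emb (a i) (A i)) (d + d')) : False := by
  apply S.fin_b j
  refine hd.trans ?_
  have := (h.trans (R.move (adj_right (S.hab i j) r))).add h'
  rwa [← Pi.single_add] at this

lemma Setup.two' (S : Setup G K r E h0 b a x B A) (h : H) {c : Fin 8 → ℕ} (hc : Good E c) :
    R (G.boxProd K) (emb h c) (Pi.single (r, h) 2) := by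
  rw [← emb_single]; exact emb_lift h (S.two c hc)

lemma Setup.one' (S : Setup G K r E h0 b a x B A) (h : H) {c : Fin 8 → ℕ} (hc : 8 ≤ ∑ g, c g) :
    R (G.boxProd K) (emb h c) (Pi.single (r, h) 1) := by
  rw [← emb_single]; exact emb_lift h (S.one c hc)

lemma Setup.h2 (S : Setup G K r E h0 b a x B A) (j : Fin 4) :
    ¬ Good E (B j + ∑ i, half (A i)) := by
  intro hg
  apply S.fin_b j
  refine R.trans ?_ (S.two' (b j) hg)
  rw [emb_add, emb_sum]
  exact (R.of_le (le_sum_one (fun j => emb (b j) (B j)) j)).add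
    (R.sum _ fun i _ => emb_half (S.hab i j) (A i))

lemma Setup.h3 (S : Setup G K r E h0 b a x B A) {i i' : Fin 3} (hi : i ≠ i')
    (h : Good E (A i)) : ¬ Good E (A i') := by
  intro h'
  refine S.fin_ab i 0 _ _ (S.two' (a i) h)
    ((S.two' (a i') h').trans (R.move (adj_right (S.hab i' 0) r))) (R.of_le ?_)
  exact (add_le_sum_pair (fun i => emb (a i) (A i)) hi).trans (le_add_of_nonneg_left bot_le)

lemma Setup.h5 (S : Setup G K r E h0 b a x B A) {i : Fin 3} (h : Good E (A i)) (j : Fin 4) :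
    ∑ g, B j g + ∑ i' ∈ Finset.univ.erase i, ∑ g, A i' g / 2 ≤ 7 := by
  by_contra hc
  have hs : 8 ≤ ∑ g, (B j + ∑ i' ∈ Finset.univ.erase i, half (A i')) g := by
    simp only [Pi.add_apply, Finset.sum_apply, Finset.sum_add_distrib, half]
    rw [Finset.sum_comm (α := Fin 3)]
    omega
  refine S.fin_ab i j _ _ (S.two' (a i) h) (S.one' (b j) hs) ?_
  rw [emb_add, emb_sum, ← Finset.add_sum_erase _ _ (Finset.mem_univ i), add_left_comm]
  refine (R.refl _).add ((R.of_le (le_sum_one (fun j => emb (b j) (B j)) j)).add ?_)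
  exact R.sum _ fun i _ => emb_half (S.hab i j) (A i)

lemma Setup.h6 (S : Setup G K r E h0 b a x B A) {i : Fin 3} {j j' : Fin 4} (hj : j ≠ j')
    (h : Good E (A i + half (B j))) : ∑ g, B j' g ≤ 7 := by
  by_contra hc
  refine S.fin_ab i j' _ _ (S.two' (a i) h) (S.one' (b j') (c := B j') (by omega)) ?_
  rw [emb_add]
  have h1 : R (G.boxProd K) (emb (b j) (B j) + emb (b j') (B j') + emb (a i) (A i))
      (emb (a i) (half (B j)) + emb (b j') (B j') + emb (a i) (A i)) :=
    ((emb_half (S.hab i j).symm _).add (R.refl _)).add (R.refl _)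
  refine h1.mono (add_le_add (add_le_sum_pair (fun j => emb (b j) (B j)) hj)
    (le_sum_one (fun i => emb (a i) (A i)) i)) (le_of_eq ?_)
  abel

lemma Setup.h4_aux (S : Setup G K r E h0 b a x B A) {i : Fin 3} (e : Fin 8 → ℕ)
    (he : ∀ g, 2 * e g ≤ A i g) (h : Good E (fun g => A i g - 2 * e g)) (j : Fin 4) :
    ∑ g, B j g + ∑ g, e g ≤ 7 := by
  by_contra hc
  have hs : 8 ≤ ∑ g, (B j + e) g := by
    simp only [Pi.add_apply, Finset.sum_add_distrib]; omega
  refine S.fin_ab i j _ _ (S.two' (a i) h) (S.one' (b j) hs) ?_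
  have h1 : R (G.boxProd K) (emb (b j) (B j) + (emb (a i) (fun g => A i g - 2 * e g) +
      emb (a i) (e + e))) (emb (b j) (B j) + (emb (a i) (fun g => A i g - 2 * e g) +
      emb (b j) e)) :=
    (R.refl _).add ((R.refl _).add (emb_double (S.hab i j) e))
  have e1 : (fun g => A i g - 2 * e g) + (e + e) = A i := by
    funext g
    have := he g
    simp only [Pi.add_apply]; omega
  rw [← emb_add (a i), e1] at h1
  refine h1.mono (add_le_add (le_sum_one (fun j => emb (b j) (B j)) j)
    (le_sum_one (fun i => emb (a i) (A i)) i)) (le_of_eq ?_)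
  rw [emb_add]; abel

lemma vv_sub {f e : Fin 8 → ℕ} (he : ∀ g, 2 * e g ≤ f g) :
    vv (fun g => f g - 2 * e g) + ∑ g, e g = vv f := by
  unfold vv
  rw [← Finset.sum_add_distrib]
  refine Finset.sum_congr rfl fun g _ => ?_
  have := he g
  show (f g - 2 * e g + 1) / 2 + e g = (f g + 1) / 2
  omega

lemma vv_le_half (f : Fin 8 → ℕ) : vv f ≤ ∑ g, half f g + 8 := by
  unfold vv
  have : ∑ g : Fin 8, (half f g + 1) = ∑ g, half f g + 8 := by
    simp [Finset.sum_add_distrib]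
  rw [← this]
  refine Finset.sum_le_sum fun g _ => ?_
  unfold half
  omega

lemma Setup.h4 (S : Setup G K r E h0 b a x B A) {z : Fin 8} (hE : E z = 9) (hEv : vv E = 9)
    {i : Fin 3} (h : Good E (A i)) (j : Fin 4) :
    ∑ g, B j g + vv (A i) ≤ 16 ∨ (∑ g, B j g + vv (A i) ≤ 17 ∧ 11 ≤ A i z) := by
  have h9 := h.1
  have hvh := vv_le_half (A i)
  rcases Nat.eq_or_lt_of_le h9 with h9 | h9
  · left
    have := S.h4_aux (i := i) 0 (by simp) (by simpa using h) j
    simp at this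
    omega
  · by_cases hz : 11 ≤ A i z
    · right
      obtain ⟨e, -, he, hes⟩ := exists_between 0 (half (A i)) bot_le (vv (A i) - 10) (by simp)
        (by omega)
      have he' : ∀ g, 2 * e g ≤ A i g := by
        intro g
        have : e g ≤ A i g / 2 := he g
        omega
      have hv := vv_sub he'
      have := S.h4_aux (i := i) e he' ⟨by omega, by rintro heq; rw [heq] at hv; omega⟩ j
      exact ⟨by omega, hz⟩
    · left
      by_cases hz9 : 9 ≤ A i z
      · obtain ⟨e, hez, he, hes⟩ := exists_between (Pi.single z 1) (half (A i))
          (by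
            intro g
            by_cases hg : g = z
            · subst hg; simp [half]; omega
            · simp [hg])
          (vv (A i) - 9) (by simp; omega) (by omega)
        have he' : ∀ g, 2 * e g ≤ A i g := by
          intro g
          have : e g ≤ A i g / 2 := he g
          omega
        have hv := vv_sub he'
        have h1 : 1 ≤ e z := by simpa using hez z
        have := S.h4_aux (i := i) e he' ⟨by omega, by
          intro heq
          have : A i z - 2 * e z = E z := congrFun heq z
          rw [hE] at this
          omega⟩ j
        omega
      · obtain ⟨e, -, he, hes⟩ := exists_between 0 (half (A i)) bot_le (vv (A i) - 9) (by simp)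
          (by omega)
        have he' : ∀ g, 2 * e g ≤ A i g := by
          intro g
          have : e g ≤ A i g / 2 := he g
          omega
        have hv := vv_sub he'
        have := S.h4_aux (i := i) e he' ⟨by omega, by
          intro heq
          have : A i z - 2 * e z = E z := congrFun heq z
          rw [hE] at this
          omega⟩ j
        omega

end Product

/-! ### Counting -/

section Count

variable {G : SimpleGraph (Fin 8)} {H : Type*} [DecidableEq H] {K : SimpleGraph H}
  {r z : Fin 8} {E : Fin 8 → ℕ} {h0 : H} {b : Fin 4 → H} {a : Fin 3 → H}
  {x : Fin 8 → ℕ} {B : Fin 4 → Fin 8 → ℕ} {A : Fin 3 → Fin 8 → ℕ}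

/-- Numerical facts about an unsolvable configuration; `n` counts available pairs in the far
layers, and `γ` marks columns where such a pair completes an odd pile. -/
structure Facts (E : Fin 8 → ℕ) (z : Fin 8) (x : Fin 8 → ℕ) (B : Fin 4 → Fin 8 → ℕ)
    (A : Fin 3 → Fin 8 → ℕ) (n γ : Fin 8 → ℕ) (κ : Fin 4 → ℕ) : Prop where
  Ez : E z = 9
  E1 : ∀ g, g ≠ z → E g ≤ 1
  Ev : vv E = 9
  tot : ∑ g, (x g + ∑ j, B j g + ∑ i, A i g) = 64
  hn : ∀ g, n g = ∑ i, A i g / 2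
  hγ : ∀ g, 1 ≤ n g →
    (B 0 g % 2 = 1 ∨ B 1 g % 2 = 1 ∨ B 2 g % 2 = 1 ∨ B 3 g % 2 = 1) → γ g = 1
  low : ∑ g, (x g + ∑ j, B j g / 2 + γ g) ≤ 7
  hκ : ∀ j, vv (B j + n) ≤ 8 + κ j
  hκE : ∀ j, κ j = 0 ∨ (κ j = 1 ∧ B j + n = E)

lemma Setup.facts (S : Setup G K r E h0 b a x B A) (Ez : E z = 9)
    (E1 : ∀ g, g ≠ z → E g ≤ 1) (Ev : vv E = 9)
    (tot : ∑ g, (x g + ∑ j, B j g + ∑ i, A i g) = 64) :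
    ∃ n γ κ, Facts E z x B A n γ κ := by
  classical
  refine ⟨∑ i, half (A i),
    fun g => if 1 ≤ ∑ i, A i g / 2 ∧ ∃ j, B j g % 2 = 1 then 1 else 0,
    fun j => if B j + ∑ i, half (A i) = E then 1 else 0, Ez, E1, Ev, tot, ?_, ?_, ?_, ?_, ?_⟩
  · intro g
    simp [half]
  · intro g hg ho
    rw [if_pos]
    refine ⟨by simpa [half] using hg, ?_⟩
    rcases ho with h | h | h | h
    exacts [⟨_, h⟩, ⟨_, h⟩, ⟨_, h⟩, ⟨_, h⟩]
  · apply S.h1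
    intro g
    by_cases hc : 1 ≤ ∑ i, A i g / 2 ∧ ∃ j, B j g % 2 = 1
    · right
      refine ⟨if_pos hc, ?_⟩
      obtain ⟨h1, j, hj⟩ := hc
      have : ∃ i, 1 ≤ A i g / 2 := by
        by_contra! hcon
        have : ∑ i, A i g / 2 = 0 := Finset.sum_eq_zero fun i _ => by
          have := hcon i
          omega
        omega
      obtain ⟨i, hi⟩ := this
      exact ⟨i, j, by omega, hj⟩
    · left
      exact if_neg hc
  · intro j
    have := S.h2 j
    unfold Good at this
    by_cases hc : B j + ∑ i, half (A i) = E
    · simp only [hc, if_true, Ev]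
      omega
    · simp only [hc, if_false]
      by_contra h
      exact this ⟨by omega, hc⟩
  · intro j
    by_cases hc : B j + ∑ i, half (A i) = E
    · right; exact ⟨if_pos hc, hc⟩
    · left; exact if_neg hc

lemma halves (b : ℕ) : b = b / 2 + (b + 1) / 2 := by omega

variable {n γ : Fin 8 → ℕ} {κ : Fin 4 → ℕ}

lemma Facts.tot_g (F : Facts E z x B A n γ κ) (g : Fin 8) :
    x g + ∑ j, B j g + ∑ i, A i g = x g + ∑ j, B j g / 2 +
      ((B 0 g + 1) / 2 + (B 1 g + 1) / 2 + (B 2 g + 1) / 2 + (B 3 g + 1) / 2 + n g) +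
      ∑ i, (A i g + 1) / 2 := by
  rw [F.hn g]
  simp only [Fin.sum_univ_four, Fin.sum_univ_three]
  have h0 := halves (B 0 g)
  have h1 := halves (B 1 g)
  have h2 := halves (B 2 g)
  have h3 := halves (B 3 g)
  have a0 := halves (A 0 g)
  have a1 := halves (A 1 g)
  have a2 := halves (A 2 g)
  linarith

lemma Facts.sumW (_F : Facts E z x B A n γ κ) :
    ∑ g, ((B 0 g + n g + 1) / 2 + (B 1 g + n g + 1) / 2 + (B 2 g + n g + 1) / 2 +
      (B 3 g + n g + 1) / 2) = ∑ j, vv (B j + n) := by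
  simp only [Fin.sum_univ_four, vv, Finset.sum_add_distrib, Pi.add_apply]

lemma Facts.sumU (_F : Facts E z x B A n γ κ) :
    ∑ g, ∑ i, (A i g + 1) / 2 = ∑ i, vv (A i) := by
  rw [Finset.sum_comm]; rfl

/-- Summation of a pointwise estimate (case B). -/
lemma Facts.sumB (F : Facts E z x B A n γ κ) (w : Fin 8) (s : ℕ)
    (hp : ∀ g, (B 0 g + 1) / 2 + (B 1 g + 1) / 2 + (B 2 g + 1) / 2 + (B 3 g + 1) / 2 + n g +
      (if g = w then s else 0) ≤ γ g + ((B 0 g + n g + 1) / 2 + (B 1 g + n g + 1) / 2 +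
        (B 2 g + n g + 1) / 2 + (B 3 g + n g + 1) / 2)) :
    57 + s ≤ ∑ j, vv (B j + n) + ∑ i, vv (A i) := by
  have h : ∑ g, ((x g + ∑ j, B j g + ∑ i, A i g) + (if g = w then s else 0)) ≤
      ∑ g, ((x g + ∑ j, B j g / 2 + γ g) + ((B 0 g + n g + 1) / 2 + (B 1 g + n g + 1) / 2 +
        (B 2 g + n g + 1) / 2 + (B 3 g + n g + 1) / 2) + ∑ i, (A i g + 1) / 2) := by
    refine Finset.sum_le_sum fun g _ => ?_
    rw [F.tot_g g]
    have := hp g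
    linarith
  rw [Finset.sum_add_distrib, F.tot, Finset.sum_add_distrib, Finset.sum_add_distrib, F.sumW,
    F.sumU, Finset.sum_ite_eq' Finset.univ w (fun _ => s), if_pos (Finset.mem_univ w)] at h
  have := F.low
  linarith

lemma Facts.sumA (F : Facts E z x B A n γ κ) (s : ℕ)
    (hp : ∀ g, 4 * ((B 0 g + 1) / 2 + (B 1 g + 1) / 2 + (B 2 g + 1) / 2 + (B 3 g + 1) / 2 + n g) +
      (if g = z then s else 0) ≤ 4 * γ g + 3 * ((B 0 g + n g + 1) / 2 + (B 1 g + n g + 1) / 2 +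
        (B 2 g + n g + 1) / 2 + (B 3 g + n g + 1) / 2) + (B 0 g + B 1 g + B 2 g + B 3 g)) :
    228 + s ≤ 3 * ∑ j, vv (B j + n) + ∑ j, ∑ g, B j g + 4 * ∑ i, vv (A i) := by
  have h : ∑ g, (4 * (x g + ∑ j, B j g + ∑ i, A i g) + (if g = z then s else 0)) ≤
      ∑ g, (4 * (x g + ∑ j, B j g / 2 + γ g) + 3 * ((B 0 g + n g + 1) / 2 +
        (B 1 g + n g + 1) / 2 + (B 2 g + n g + 1) / 2 + (B 3 g + n g + 1) / 2) +
        ∑ j, B j g + 4 * ∑ i, (A i g + 1) / 2) := by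
    refine Finset.sum_le_sum fun g _ => ?_
    rw [F.tot_g g]
    have := hp g
    have e : ∑ j, B j g = B 0 g + B 1 g + B 2 g + B 3 g := Fin.sum_univ_four _
    linarith
  rw [Finset.sum_add_distrib, ← Finset.mul_sum, F.tot, Finset.sum_add_distrib,
    Finset.sum_add_distrib, Finset.sum_add_distrib, ← Finset.mul_sum, ← Finset.mul_sum,
    ← Finset.mul_sum, F.sumW, F.sumU, Finset.sum_ite_eq' Finset.univ z (fun _ => s),
    if_pos (Finset.mem_univ z), Finset.sum_comm (α := Fin 4)] at h
  have := F.low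
  linarith

lemma Facts.kz (F : Facts E z x B A n γ κ) (j : Fin 4) :
    κ j = 0 ∨ (κ j = 1 ∧ B j z + n z = 9) := by
  rcases F.hκE j with h | ⟨h, h'⟩
  · exact Or.inl h
  · refine Or.inr ⟨h, ?_⟩
    rw [← F.Ez, ← h']
    rfl

lemma Facts.lowz (F : Facts E z x B A n γ κ) :
    B 0 z / 2 + B 1 z / 2 + B 2 z / 2 + B 3 z / 2 ≤ 7 := by
  have h := Finset.single_le_sum (f := fun g => x g + ∑ j, B j g / 2 + γ g)
    (fun _ _ => Nat.zero_le _) (Finset.mem_univ z)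
  have h' := h.trans F.low
  simp only [Fin.sum_univ_four] at h'
  generalize B 0 z / 2 = t0 at *
  generalize B 1 z / 2 = t1 at *
  generalize B 2 z / 2 = t2 at *
  generalize B 3 z / 2 = t3 at *
  omega

/-- Not good: `vv` is at most `8`, up to the exceptional configuration. -/
lemma not_good (Ez : E z = 9) (Ev : vv E = 9) {f : Fin 8 → ℕ} (h : ¬ Good E f) :
    ∃ l, vv f ≤ 8 + l ∧ 4 * l ≤ f z / 2 := by
  by_cases hf : f = E
  · subst hf
    exact ⟨1, by omega, by omega⟩
  · refine ⟨0, ?_, by omega⟩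
    by_contra hc
    exact h ⟨by omega, hf⟩

lemma three (i0 : Fin 3) : ∃ i1 i2 : Fin 3, i0 ≠ i1 ∧ i0 ≠ i2 ∧
    ∀ f : Fin 3 → ℕ, ∑ i, f i = f i0 + (f i1 + f i2) := by
  fin_cases i0
  · exact ⟨1, 2, by decide, by decide, fun f => by simp [Fin.sum_univ_three]; ring⟩
  · exact ⟨0, 2, by decide, by decide, fun f => by simp [Fin.sum_univ_three]; ring⟩
  · exact ⟨0, 1, by decide, by decide, fun f => by simp [Fin.sum_univ_three]; ring⟩

theorem caseA (S : Setup G K r E h0 b a x B A) (F : Facts E z x B A n γ κ) (i0 : Fin 3)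
    (hg : Good E (A i0)) : False := by
  obtain ⟨i1, i2, h1, h2, hsum⟩ := three i0
  obtain ⟨l1, hv1, hl1⟩ := not_good F.Ez F.Ev (S.h3 h1 hg)
  obtain ⟨l2, hv2, hl2⟩ := not_good F.Ez F.Ev (S.h3 h2 hg)
  have hnz : n z = A i0 z / 2 + (A i1 z / 2 + A i2 z / 2) := by
    rw [F.hn z, hsum]
  have h5 : ∀ j, B j z + 4 * (l1 + l2) ≤ 7 := by
    intro j
    have h := S.h5 hg j
    have e1 := Finset.add_sum_erase Finset.univ (fun i => ∑ g, A i g / 2) (Finset.mem_univ i0)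
    rw [hsum] at e1
    have e2 := Nat.add_left_cancel e1
    rw [e2] at h
    have b1 := Finset.single_le_sum (f := fun g => B j g) (fun _ _ => Nat.zero_le _)
      (Finset.mem_univ z)
    have b2 := Finset.single_le_sum (f := fun g => A i1 g / 2) (fun _ _ => Nat.zero_le _)
      (Finset.mem_univ z)
    have b3 := Finset.single_le_sum (f := fun g => A i2 g / 2) (fun _ _ => Nat.zero_le _)
      (Finset.mem_univ z)
    clear e1 e2
    linarith
  obtain ⟨ρ, hρ, hρz⟩ : ∃ ρ, (∀ j, ∑ g, B j g + vv (A i0) ≤ 16 + ρ) ∧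
      (ρ = 0 ∨ (ρ = 1 ∧ 5 + 4 * (l1 + l2) ≤ n z)) := by
    by_cases h11 : 11 ≤ A i0 z
    · refine ⟨1, fun j => ?_, Or.inr ⟨rfl, by omega⟩⟩
      rcases S.h4 F.Ez F.Ev hg j with h | ⟨h, -⟩
      · omega
      · omega
    · refine ⟨0, fun j => ?_, Or.inl rfl⟩
      rcases S.h4 F.Ez F.Ev hg j with h | ⟨-, h⟩
      · exact h
      · exact absurd h h11
  have key := F.sumA (4 * (l1 + l2) + 3 * (κ 0 + κ 1 + κ 2 + κ 3) + 4 * ρ) (by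
    intro g
    by_cases hgz : g = z
    · subst hgz
      rw [if_pos rfl]
      exact ptAz _ _ _ _ _ _ _ _ _ _ _ _ (F.hγ g) (F.kz 0) (F.kz 1) (F.kz 2) (F.kz 3)
        (by omega) (h5 0) (h5 1) (h5 2) (h5 3) hρz
    · rw [if_neg hgz, add_zero]
      exact ptA _ _ _ _ _ _ (F.hγ g))
  rw [hsum, Fin.sum_univ_four, Fin.sum_univ_four] at key
  have k0 := F.hκ 0
  have k1 := F.hκ 1
  have k2 := F.hκ 2
  have k3 := F.hκ 3
  have r0 := hρ 0
  have r1 := hρ 1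
  have r2 := hρ 2
  have r3 := hρ 3
  linarith

lemma k_nine {k c : ℕ} (h : k = 0 ∨ (k = 1 ∧ c + 0 = 9)) : 4 * k ≤ c / 2 := by omega

theorem caseB (S : Setup G K r E h0 b a x B A) (F : Facts E z x B A n γ κ)
    (hg : ∀ i, ¬ Good E (A i)) : False := by
  obtain ⟨l0, hv0, hl0⟩ := not_good F.Ez F.Ev (hg 0)
  obtain ⟨l1, hv1, hl1⟩ := not_good F.Ez F.Ev (hg 1)
  obtain ⟨l2, hv2, hl2⟩ := not_good F.Ez F.Ev (hg 2)
  have k0 := F.hκ 0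
  have k1 := F.hκ 1
  have k2 := F.hκ 2
  have k3 := F.hκ 3
  have hnz := F.hn z
  rw [Fin.sum_univ_three] at hnz
  have hl : 4 * (l0 + l1 + l2) ≤ n z := by
    rw [hnz]
    clear k0 k1 k2 k3
    linarith
  by_cases hm : 1 ≤ n z ∨ κ 0 + κ 1 + κ 2 + κ 3 = 0
  · have key := F.sumB z (κ 0 + κ 1 + κ 2 + κ 3 + (l0 + l1 + l2)) (by
      intro g
      by_cases hgz : g = z
      · subst hgz
        rw [if_pos rfl]
        exact ptBz _ _ _ _ _ _ _ _ _ _ _ (F.hγ g) (F.kz 0) (F.kz 1) (F.kz 2) (F.kz 3)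
          hl hm F.lowz
      · rw [if_neg hgz, add_zero]
        exact ptB _ _ _ _ _ _ (F.hγ g))
    rw [Fin.sum_univ_four, Fin.sum_univ_three] at key
    clear hm
    linarith
  · simp only [not_or, not_le] at hm
    obtain ⟨hm1, hm2⟩ := hm
    have hz0 : n z = 0 := by omega
    have hl' : l0 = 0 ∧ l1 = 0 ∧ l2 = 0 := by
      clear k0 k1 k2 k3 hnz hl0 hl1 hl2
      omega
    obtain ⟨rfl, rfl, rfl⟩ := hl'
    have hk1 : κ 0 + κ 1 + κ 2 + κ 3 = 1 := by
      have q0 := F.kz 0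
      have q1 := F.kz 1
      have q2 := F.kz 2
      have q3 := F.kz 3
      rw [hz0] at q0 q1 q2 q3
      have t0 := k_nine q0
      have t1 := k_nine q1
      have t2 := k_nine q2
      have t3 := k_nine q3
      have hs := F.lowz
      clear q0 q1 q2 q3 k0 k1 k2 k3 hnz hl0 hl1 hl2
      generalize B 0 z / 2 = t0 at *
      generalize B 1 z / 2 = t1 at *
      generalize B 2 z / 2 = t2 at *
      generalize B 3 z / 2 = t3 at *
      omega
    have hj1 : ∃ j, κ j = 1 := by
      by_contra! hcon
      have q0 := (F.kz 0).resolve_right fun h => hcon 0 h.1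
      have q1 := (F.kz 1).resolve_right fun h => hcon 1 h.1
      have q2 := (F.kz 2).resolve_right fun h => hcon 2 h.1
      have q3 := (F.kz 3).resolve_right fun h => hcon 3 h.1
      rw [q0, q1, q2, q3] at hk1
      omega
    obtain ⟨j1, hj1⟩ := hj1
    have hBE : B j1 + n = E := by
      rcases F.hκE j1 with h | h
      · omega
      · exact h.2
    by_cases hw : ∃ w, w ≠ z ∧ 1 ≤ n w
    · obtain ⟨w, hwz, hnw⟩ := hw
      have hb1 : B j1 w + n w ≤ 1 := by
        have := F.E1 w hwz
        rw [← hBE] at this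
        exact this
      have hnw1 : n w = 1 := by omega
      have hbw : B j1 w = 0 := by omega
      have key := F.sumB w 1 (by
        intro g
        by_cases hgw : g = w
        · subst hgw
          rw [if_pos rfl]
          have hγ' := F.hγ g hnw
          rw [hnw1]
          refine ptB_one _ _ _ _ _ hγ' ?_
          have : ¬ B j1 g % 2 = 1 := by rw [hbw]; norm_num
          revert this
          clear hj1 hBE hb1 hbw
          fin_cases j1
          · exact fun h => Or.inl h
          · exact fun h => Or.inr (Or.inl h)
          · exact fun h => Or.inr (Or.inr (Or.inl h))
          · exact fun h => Or.inr (Or.inr (Or.inr h))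
        · rw [if_neg hgw, add_zero]
          exact ptB _ _ _ _ _ _ (F.hγ g))
      rw [Fin.sum_univ_four, Fin.sum_univ_three] at key
      linarith
    · have hn0 : n = 0 := by
        funext g
        by_cases hgz : g = z
        · subst hgz; exact hz0
        · by_contra hc
          exact hw ⟨g, hgz, Nat.one_le_iff_ne_zero.mpr hc⟩
      rw [hn0, add_zero] at hBE
      have key := F.sumB z 0 (by
        intro g
        rw [ite_self, add_zero]
        exact ptB _ _ _ _ _ _ (F.hγ g))
      rw [Fin.sum_univ_four, Fin.sum_univ_three] at key
      have hA0 : 8 ≤ vv (A 0) := by linarith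
      have hj2 : ∃ j2, j1 ≠ j2 ∧ 8 ≤ vv (B j2 + n) := by
        by_cases h : j1 = 0
        · subst h
          exact ⟨1, by decide, by linarith⟩
        · exact ⟨0, h, by linarith⟩
      obtain ⟨j2, hj12, hv⟩ := hj2
      rw [hn0, add_zero] at hv
      have hAle : ∀ g, A 0 g ≤ 1 := by
        intro g
        have := F.hn g
        rw [hn0, Fin.sum_univ_three] at this
        have h1 : A 0 g / 2 = 0 := by
          generalize A 0 g / 2 = t0 at *
          generalize A 1 g / 2 = t1 at *
          generalize A 2 g / 2 = t2 at *
          simp only [Pi.zero_apply] at this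
          omega
        omega
      have hgood : Good E (A 0 + half (B j1)) := by
        constructor
        · have e : vv (A 0 + half (B j1)) = vv (A 0) + 2 := by
            have : ∑ g : Fin 8, ((A 0 g + 1) / 2 + (if g = z then 2 else 0)) = vv (A 0) + 2 := by
              rw [Finset.sum_add_distrib, Finset.sum_ite_eq' Finset.univ z (fun _ => 2),
                if_pos (Finset.mem_univ z)]
              rfl
            rw [← this]
            refine Finset.sum_congr rfl fun g _ => ?_
            rw [hBE]
            show (A 0 g + E g / 2 + 1) / 2 = _
            by_cases hgz : g = z
            · subst hgz
              rw [if_pos rfl, F.Ez]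
              omega
            · rw [if_neg hgz]
              have h1 := F.E1 g hgz
              have h2 : E g / 2 = 0 := by omega
              rw [h2, add_zero, add_zero]
          omega
        · intro h
          have h1 : A 0 z + B j1 z / 2 = E z := congrFun h z
          rw [hBE, F.Ez] at h1
          have := hAle z
          omega
      have h7 := S.h6 hj12 hgood
      have : vv (B j2) ≤ ∑ g, B j2 g := Finset.sum_le_sum fun g _ => ceil_le_self _
      omega

theorem solve (hN : Nice G r) (hb : ∀ j, K.Adj (b j) h0) (hab : ∀ i j, K.Adj (a i) (b j))
    (tot : ∑ g, (x g + ∑ j, B j g + ∑ i, A i g) = 64) :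
    R (G.boxProd K) (conf h0 b a x B A) (Pi.single (r, h0) 1) := by
  by_contra uns
  obtain ⟨one, E, z, Ez, E1, Ev, two⟩ := hN
  have S : Setup G K r E h0 b a x B A := ⟨one, fun c hc => two c hc.1 hc.2, hb, hab, uns⟩
  obtain ⟨n, γ, κ, F⟩ := S.facts Ez E1 Ev tot
  by_cases h : ∃ i, Good E (A i)
  · obtain ⟨i, hi⟩ := h
    exact caseA S F i hi
  · exact caseB S F fun i hi => h ⟨i, hi⟩

end Count

/-! ### Assembly -/

section Final

lemma pebbling_eq {V : Type*} [Fintype V] [DecidableEq V] (G : SimpleGraph V)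
    (hcard : Fintype.card V = 64)
    (h : ∀ c : V → ℕ, (∑ v, c v) = 64 → ∀ r, Solvable G c r) : pebblingNumber G = 64 := by
  unfold pebblingNumber
  apply le_antisymm
  · exact Nat.sInf_le h
  · refine le_csInf ⟨64, h⟩ ?_
    intro k hk
    by_contra hlt
    have hne : Nonempty V := Fintype.card_pos_iff.mp (by omega)
    obtain ⟨r⟩ := hne
    have hc : (Finset.univ.erase r).card = 63 := by
      rw [Finset.card_erase_of_mem (Finset.mem_univ r), Finset.card_univ, hcard]
    obtain ⟨s, hs, hsk⟩ := Finset.exists_subset_card_eq (s := Finset.univ.erase r) (n := k)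
      (by omega)
    obtain ⟨c', hc', h1⟩ := hk (fun v => if v ∈ s then 1 else 0) (by simp [hsk]) r
    rcases Relation.ReflTransGen.cases_head hc' with heq | ⟨d, ⟨v, w, -, h2, -⟩, -⟩
    · rw [← heq] at h1
      have : r ∉ s := fun hr => by simpa using hs hr
      simp [this] at h1
    · by_cases hv : v ∈ s <;> simp [hv] at h2

lemma conf_eq {H : Type*} [DecidableEq H] [Fintype H] (c : Fin 8 × H → ℕ) :
    c = ∑ h, emb h fun g => c (g, h) := by
  conv_lhs => rw [← Finset.univ_sum_single c]
  rw [Fintype.sum_prod_type_right]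
  rfl

lemma reach44 {G : SimpleGraph (Fin 8)} {r : Fin 8} (hN : Nice G r)
    (c : Fin 8 × (Fin 4 ⊕ Fin 4) → ℕ) (hc : ∑ v, c v = 64) (h : Fin 4 ⊕ Fin 4) :
    R (G.boxProd (completeBipartiteGraph (Fin 4) (Fin 4))) c (Pi.single (r, h) 1) := by
  rw [Fintype.sum_prod_type] at hc
  rw [conf_eq c, Fintype.sum_sum_type]
  rcases h with i | i
  · have key := solve (K := completeBipartiteGraph (Fin 4) (Fin 4)) (h0 := Sum.inl i)
      (b := fun j => Sum.inr j) (a := fun k => Sum.inl (i.succAbove k))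
      (x := fun g => c (g, Sum.inl i)) (B := fun j g => c (g, Sum.inr j))
      (A := fun k g => c (g, Sum.inl (i.succAbove k))) hN (by simp) (by simp) (by
        rw [← hc]
        refine Finset.sum_congr rfl fun g _ => ?_
        rw [Fintype.sum_sum_type, Fin.sum_univ_succAbove (fun k => c (g, Sum.inl k)) i]
        ring)
    refine key.mono (le_of_eq ?_) le_rfl
    rw [conf, Fin.sum_univ_succAbove (fun k => emb (Sum.inl k : Fin 4 ⊕ Fin 4) _) i]
    abel
  · have key := solve (K := completeBipartiteGraph (Fin 4) (Fin 4)) (h0 := Sum.inr i)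
      (b := fun j => Sum.inl j) (a := fun k => Sum.inr (i.succAbove k))
      (x := fun g => c (g, Sum.inr i)) (B := fun j g => c (g, Sum.inl j))
      (A := fun k g => c (g, Sum.inr (i.succAbove k))) hN (by simp) (by simp) (by
        rw [← hc]
        refine Finset.sum_congr rfl fun g _ => ?_
        rw [Fintype.sum_sum_type, Fin.sum_univ_succAbove (fun k => c (g, Sum.inr k)) i]
        ring)
    refine key.mono (le_of_eq ?_) le_rfl
    rw [conf, Fin.sum_univ_succAbove (fun k => emb (Sum.inr k : Fin 4 ⊕ Fin 4) _) i]
    abel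

lemma reach8 {G : SimpleGraph (Fin 8)} {r : Fin 8} (hN : Nice G r)
    (c : Fin 8 × Fin 8 → ℕ) (hc : ∑ v, c v = 64) (h : Fin 8) :
    R (G.boxProd (⊤ : SimpleGraph (Fin 8))) c (Pi.single (r, h) 1) := by
  let e : Fin 4 ⊕ Fin 4 ≃ Fin 8 := finSumFinEquiv
  let f : Fin 8 × (Fin 4 ⊕ Fin 4) ≃ Fin 8 × Fin 8 := (Equiv.refl _).prodCongr e
  have h1 := reach44 hN (fun v => c (f v)) (by rw [← hc]; exact Equiv.sum_comp f c) (e.symm h)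
  have h2 := R.push (G' := G.boxProd (⊤ : SimpleGraph (Fin 8))) f (by
    rintro ⟨g, k⟩ ⟨g', k'⟩ hadj
    rw [SimpleGraph.boxProd_adj] at hadj ⊢
    rcases hadj with ⟨h1, h2⟩ | ⟨h1, h2⟩
    · exact Or.inl ⟨h1, congrArg e h2⟩
    · refine Or.inr ⟨?_, h2⟩
      rw [SimpleGraph.top_adj]
      intro heq
      exact h1.ne (e.injective heq)) h1
  rw [push_single] at h2
  have e1 : f (r, e.symm h) = (r, h) := by simp [f]
  rw [e1] at h2
  refine h2.mono (le_of_eq ?_) le_rfl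
  unfold push
  rw [Equiv.sum_comp f fun v => Pi.single (M := fun _ : Fin 8 × Fin 8 => ℕ) v (c v)]
  exact Finset.univ_sum_single c

lemma both {G : SimpleGraph (Fin 8)} (hN : ∀ r, Nice G r) :
    pebblingNumber (G.boxProd (⊤ : SimpleGraph (Fin 8))) = 64 ∧
      pebblingNumber (G.boxProd (completeBipartiteGraph (Fin 4) (Fin 4))) = 64 := by
  constructor
  · exact pebbling_eq _ (by simp) fun c hc r => (reach8 (hN r.1) c hc r.2).solvable
  · exact pebbling_eq _ (by simp) fun c hc r => (reach44 (hN r.1) c hc r.2).solvable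

end Final

end Peb

/-- for each minimal Lemke graph `G ∈ {L, L₁, L₂}` and `H ∈ {K₈, K_{4,4}}`,
`π(G □ H) = 64`. -/
theorem stmt12 :
    ∀ G ∈ ({lemkeL, lemkeL1, lemkeL2} : Set (SimpleGraph (Fin 8))),
      pebblingNumber (G.boxProd (⊤ : SimpleGraph (Fin 8))) = 64 ∧
      pebblingNumber (G.boxProd (completeBipartiteGraph (Fin 4) (Fin 4))) = 64 := by
  intro G hG
  rcases hG with rfl | rfl | rfl
  · exact Peb.both Peb.niceL
  · exact Peb.both Peb.niceL1
  · exact Peb.both Peb.niceL2
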